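/- (Theorem: rate of contraction for fixed-design regression with the simplified kernel mixture of polynomials prior) Let α > 0, B > 0, m ≥ α, p ∈ ℕ₊, σ₀ > 0, and a_σ, b_σ ≥ 2. Let f₀ ∈ 𝔠^{α,B}([0,1]^p) and let (x_i)_{i=1}^n ⊂ [0,1]^p be fixed design points. Set K_n = ⌈(n/log n)^{1/(2α+p)}⌉, h = 2/K_n, μ_k = μ_k^⋆ for all k ∈ [K_n]^p, and parametrize f(x) = Σ_{k ∈ [K_n]^p} Σ_{s : |s| ≤ m} ξ_{ks} ψ_{ks}(x) with ψ_{ks}(x) = φ_h(x−μ_k^⋆)(x−μ_k^⋆)^s / Σ_{l ∈ [K_n]^p} φ_h(x−μ_l^⋆). Let the prior Π^n put ξ_{ks} | σ ~ N(0, n²σ²) independently and σ² ~ inverse-Gamma with density ∝ (σ²)^{−a_σ/2−1} exp(−b_σ/(2σ²)). Assume y_i = f₀(x_i) + e_i with e_i i.i.d. N(0, σ₀²). Then there exists M > 0 such that, with ε_n = n^{−α/(2α+p)} (log n)^{α/(2α+p)}, the posterior satisfies Π^n( ‖f − f₀‖²_{L₂(P_n)} > M ε_n² | D_n ) → 0 in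 P₀-probability as n → ∞, where ‖f − f₀‖_{L₂(P_n)} = [ (1/n) Σ_{i=1}^n (f(x_i) − f₀(x_i))² ]^{1/2}. -/

import Mathlib

open MeasureTheory Filter Real Matrix
open scoped ENNReal NNReal BigOperators Classical

noncomputable section

namespace KMP

/-- The unit hypercube `[0,1]^p`. -/
def cube (p : ℕ) : Set (Fin p → ℝ) := {x | ∀ j, 0 ≤ x j ∧ x j ≤ 1}

/-- A boxed kernel: continuous, `[0,1]`-valued, supported on the closed unit sup-norm ball,
nonincreasing in the sup-norm (`‖·‖` on `Fin p → ℝ` is the sup-norm). -/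
def IsBoxedKernel {p : ℕ} (φ : (Fin p → ℝ) → ℝ) : Prop :=
  Continuous φ ∧ (∀ u, 0 ≤ φ u ∧ φ u ≤ 1) ∧ (∀ u, 1 < ‖u‖ → φ u = 0) ∧
    ∀ u v, ‖u‖ ≤ ‖v‖ → φ v ≤ φ u

/-- The block `X_K(k) = ∏_j ((k_j-1)/K, k_j/K]`; here `k j : Fin K` encodes `k_j - 1`. -/
def block {p : ℕ} (K : ℕ) (k : Fin p → Fin K) : Set (Fin p → ℝ) :=
  {x | ∀ j, ((k j : ℕ) : ℝ) / K < x j ∧ x j ≤ (((k j : ℕ) : ℝ) + 1) / K}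

/-- The closure of the block `X_K(k)`. -/
def blockCl {p : ℕ} (K : ℕ) (k : Fin p → Fin K) : Set (Fin p → ℝ) :=
  {x | ∀ j, ((k j : ℕ) : ℝ) / K ≤ x j ∧ x j ≤ (((k j : ℕ) : ℝ) + 1) / K}

/-- The center `μ_k^⋆` of the block `X_K(k)`. -/
def center {p : ℕ} (K : ℕ) (k : Fin p → Fin K) : Fin p → ℝ :=
  fun j => (2 * ((k j : ℕ) : ℝ) + 1) / (2 * K)

/-- Multi-indices `s ∈ {0,…,m}^p` with `|s| ≤ m`. -/
def mIdx (p m : ℕ) : Finset (Fin p → Fin (m + 1)) :=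
  Finset.univ.filter fun s => (∑ j, (s j : ℕ)) ≤ m

/-- Degree `|s|` of a multi-index. -/
def deg {p m : ℕ} (s : Fin p → Fin (m + 1)) : ℕ := ∑ j, (s j : ℕ)

/-- Kernel mixture weight `w_k(x) = φ_h(x-μ_k) / ∑_l φ_h(x-μ_l)`. -/
def weight {p : ℕ} (φ : (Fin p → ℝ) → ℝ) (K : ℕ) (h : ℝ)
    (μ : (Fin p → Fin K) → Fin p → ℝ) (k : Fin p → Fin K) (x : Fin p → ℝ) : ℝ :=
  φ (fun j => (x j - μ k j) / h) / ∑ l : Fin p → Fin K, φ (fun j => (x j - μ l j) / h)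

/-- Monomial `(x - μ_k^⋆)^s`. -/
def mono {p : ℕ} (K m : ℕ) (k : Fin p → Fin K) (s : Fin p → Fin (m + 1))
    (x : Fin p → ℝ) : ℝ :=
  ∏ j, (x j - center K k j) ^ (s j : ℕ)

/-- A kernel mixture of polynomials
`f(x) = ∑_k ∑_{|s| ≤ m} ξ_{ks} w_k(x) (x - μ_k^⋆)^s`. -/
def kmpFun {p : ℕ} (φ : (Fin p → ℝ) → ℝ) (K m : ℕ) (h : ℝ)
    (μ : (Fin p → Fin K) → Fin p → ℝ)
    (ξ : (Fin p → Fin K) → (Fin p → Fin (m + 1)) → ℝ) (x : Fin p → ℝ) : ℝ :=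
  ∑ k : Fin p → Fin K, ∑ s ∈ mIdx p m, ξ k s * weight φ K h μ k x * mono K m k s x

/-- Partial derivative in the `j`-th coordinate direction. -/
def pderiv1 {p : ℕ} (j : Fin p) (f : (Fin p → ℝ) → ℝ) : (Fin p → ℝ) → ℝ :=
  fun x => fderiv ℝ f x (Pi.single j 1)

/-- Mixed partial derivative `D^s f`. -/
def mderiv {p : ℕ} (s : Fin p → ℕ) (f : (Fin p → ℝ) → ℝ) : (Fin p → ℝ) → ℝ :=
  (List.finRange p).foldr (fun j g => (pderiv1 j)^[s j] g) f

/-- Degree of an `ℕ`-valued multi-index. -/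
def degN {p : ℕ} (s : Fin p → ℕ) : ℕ := ∑ j, s j

/-- Euclidean norm on `Fin p → ℝ`. -/
def eucNorm {p : ℕ} (x : Fin p → ℝ) : ℝ := Real.sqrt (∑ j, (x j) ^ 2)

/-- `⌈α - 1⌉` (as a natural number; it is `0` when `α ≤ 1`). -/
def hOrder (α : ℝ) : ℕ := ⌈α - 1⌉₊

/-- The α-Hölder class with envelope `B` on `[0,1]^p`: `⌈α-1⌉`-times continuously
differentiable, and the sum of the sup-norm bound on all derivatives of order `≤ ⌈α-1⌉`
and the Hölder constant of the derivatives of order `⌈α-1⌉` is at most `B`. -/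
def IsHolder (p : ℕ) (α B : ℝ) (f : (Fin p → ℝ) → ℝ) : Prop :=
  ContDiff ℝ (hOrder α : ℕ∞) f ∧
    ∃ B₁ B₂ : ℝ, 0 ≤ B₁ ∧ 0 ≤ B₂ ∧ B₁ + B₂ ≤ B ∧
      (∀ s : Fin p → ℕ, degN s ≤ hOrder α → ∀ x ∈ cube p, |mderiv s f x| ≤ B₁) ∧
      (∀ s : Fin p → ℕ, degN s = hOrder α → ∀ x ∈ cube p, ∀ y ∈ cube p, x ≠ y →
        |mderiv s f x - mderiv s f y| ≤ B₂ * eucNorm (x - y) ^ (α - (degN s : ℝ)))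

/-- The `N(0, σ²)` density `φ_σ`. -/
def gaussD (σ t : ℝ) : ℝ := (σ * Real.sqrt (2 * π))⁻¹ * Real.exp (-t ^ 2 / (2 * σ ^ 2))

/-- `K_n = ⌈(n / log n)^{1/(2α+p)}⌉`. -/
def Kn (α : ℝ) (p n : ℕ) : ℕ := ⌈((n : ℝ) / Real.log n) ^ (1 / (2 * α + (p : ℝ)))⌉₊

/-- The simplified kernel mixture of polynomials of the fixed-design setting:
`K = K_n`, `h = 2/K_n`, and all centers fixed at the block centers `μ_k^⋆`. -/
def simpleKmp {p : ℕ} (φ : (Fin p → ℝ) → ℝ) (m : ℕ) (α : ℝ) (n : ℕ)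
    (ξ : (Fin p → Fin (Kn α p n)) → (Fin p → Fin (m + 1)) → ℝ) :
    (Fin p → ℝ) → ℝ :=
  kmpFun φ (Kn α p n) m (2 / (Kn α p n : ℝ)) (fun k => center (Kn α p n) k) ξ

/-- Generic posterior probability of a set `A` given likelihood `L` and prior. -/
def postGen {Θ : Type*} [MeasurableSpace Θ] (prior : Measure Θ) (L : Θ → ℝ)
    (A : Set Θ) : ℝ :=
  (∫ θ in A, L θ ∂prior) / ∫ θ, L θ ∂prior

/-- The prior of the fixed-design setting on `(ξ, σ²)`: `σ² = v ~ πv` (inverse Gamma) and,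
given `v`, the coefficients `ξ_{ks} ~ N(0, n² v)` i.i.d. -/
def fixedPrior (α : ℝ) (p m n : ℕ) (πv : Measure ℝ) :
    Measure (((Fin p → Fin (Kn α p n)) → (Fin p → Fin (m + 1)) → ℝ) × ℝ) :=
  πv.bind fun v =>
    (Measure.pi fun _ : Fin p → Fin (Kn α p n) =>
        Measure.pi fun _ : Fin p → Fin (m + 1) =>
          ProbabilityTheory.gaussianReal 0 (Real.toNNReal ((n : ℝ) ^ 2 * v))).prod
      (Measure.dirac v)

/-!
Given the error variance, Gaussian likelihood times Gaussian prior is the likelihood of a linear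
model augmented by one zero pseudo-observation per coefficient, so it is a Gaussian in the distance
to the augmented least-squares fit. That fit errs through bias and noise. Taylor polynomials at the
block centers have bounded coefficients and, since only the centers within `h = 2 / K_n` of a point
carry weight there, approximate the truth up to `K_n ^ (-α)`. The noise enters through its
projection onto a space of dimension `O(K_n ^ p)`, and `K_n` makes `n * K_n ^ (-2 * α)` dominate
that dimension by a factor `log n`. The posterior spread around the fit is controlled by a Chernoff
bound as long as the error variance stays below a slowly diverging level `16 * √(log n)`; larger
variances are excluded by comparing the inverse-gamma kernel at `v` and at `2 * v`, which gains
a factor exponential in `n`.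
-/

variable {p : ℕ}

/-- The iterated partial derivative `∂_{j₁} ⋯ ∂_{jᵢ} f` along the word `[j₁, …, jᵢ]`. Unlike
`mderiv` it keeps the order of differentiation, which is how derivatives along a line come out. -/
def wordDeriv (L : List (Fin p)) (f : (Fin p → ℝ) → ℝ) : (Fin p → ℝ) → ℝ :=
  L.foldr pderiv1 f

/-- The multi-index of a word: how often each coordinate occurs in it. -/
def wordIndex {i : ℕ} (J : Fin i → Fin p) : Fin p → ℕ := fun j => (List.ofFn J).count j

lemma contDiff_pderiv1 {k : ℕ} (j : Fin p) {f : (Fin p → ℝ) → ℝ}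
    (hf : ContDiff ℝ (k + 1 : ℕ) f) : ContDiff ℝ k (pderiv1 j f) :=
  (hf.fderiv_right (by norm_cast)).clm_apply contDiff_const

lemma contDiff_wordDeriv {f : (Fin p → ℝ) → ℝ} (L : List (Fin p)) {k : ℕ}
    (hf : ContDiff ℝ (k + L.length : ℕ) f) : ContDiff ℝ k (wordDeriv L f) := by
  induction L generalizing k with
  | nil => exact hf
  | cons j L ih =>
    refine contDiff_pderiv1 j (ih ?_)
    rwa [List.length_cons, ← Nat.succ_add_eq_add_succ] at hf

lemma pderiv1_pderiv1 (i j : Fin p) {f : (Fin p → ℝ) → ℝ} (hf : ContDiff ℝ 2 f) :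
    pderiv1 i (pderiv1 j f) =
      fun x => fderiv ℝ (fderiv ℝ f) x (Pi.single i 1) (Pi.single j 1) := by
  have hd : Differentiable ℝ (fderiv ℝ f) :=
    (hf.fderiv_right (m := 1) (by norm_num)).differentiable (by simp)
  funext x
  unfold pderiv1
  rw [fderiv_clm_apply (hd x) (differentiableAt_const _)]
  simp

lemma pderiv1_comm (i j : Fin p) {f : (Fin p → ℝ) → ℝ} (hf : ContDiff ℝ 2 f) :
    pderiv1 i (pderiv1 j f) = pderiv1 j (pderiv1 i f) := by
  rw [pderiv1_pderiv1 i j hf, pderiv1_pderiv1 j i hf]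
  funext x
  exact (hf.contDiffAt (x := x)).isSymmSndFDerivAt (by simp) _ _

lemma wordDeriv_perm {f : (Fin p → ℝ) → ℝ} {L₁ L₂ : List (Fin p)} (h : L₁.Perm L₂)
    (hf : ContDiff ℝ L₁.length f) : wordDeriv L₁ f = wordDeriv L₂ f := by
  induction h with
  | nil => rfl
  | cons j h ih =>
    exact congrArg (pderiv1 j) (ih (hf.of_le (by simp)))
  | swap i j L =>
    refine pderiv1_comm _ _ (contDiff_wordDeriv L (k := 2) (hf.of_le ?_))
    exact_mod_cast (by simp only [List.length_cons]; omega)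
  | trans h₁ _ ih₁ ih₂ =>
    rw [ih₁ hf, ih₂ (h₁.length_eq ▸ hf)]

lemma mderiv_eq_wordDeriv (s : Fin p → ℕ) (f : (Fin p → ℝ) → ℝ) :
    mderiv s f = wordDeriv ((List.finRange p).flatMap fun j => List.replicate (s j) j) f := by
  have foldr_replicate (j : Fin p) (n : ℕ) (g : (Fin p → ℝ) → ℝ) :
      (List.replicate n j).foldr pderiv1 g = (pderiv1 j)^[n] g := by
    induction n with
    | zero => rfl
    | succ n ih => rw [List.replicate_succ, List.foldr_cons, ih, Function.iterate_succ_apply']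
  unfold mderiv wordDeriv
  induction List.finRange p with
  | nil => rfl
  | cons j L ih => rw [List.foldr_cons, List.flatMap_cons, List.foldr_append, foldr_replicate, ih]

lemma wordDeriv_eq_mderiv {f : (Fin p → ℝ) → ℝ} (L : List (Fin p))
    (hf : ContDiff ℝ L.length f) : wordDeriv L f = mderiv (fun j => L.count j) f := by
  rw [mderiv_eq_wordDeriv]
  refine wordDeriv_perm (List.perm_iff_count.2 fun a => ?_) hf
  have hcount : (List.count a ∘ fun j => List.replicate (L.count j) j) =
      fun j => if j = a then L.count a else 0 := by
    funext j
    by_cases h : j = a <;> simp [List.count_replicate, h]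
  rw [List.count_flatMap, hcount, ← List.ofFn_eq_map, List.sum_ofFn]
  simp

lemma prod_eq_prod_pow_wordIndex {i : ℕ} (J : Fin i → Fin p) (h : Fin p → ℝ) :
    ∏ l, h (J l) = ∏ j, h j ^ wordIndex J j := by
  rw [← List.prod_ofFn, ← Function.comp_def, ← List.map_ofFn, Finset.prod_list_map_count]
  exact Finset.prod_subset (Finset.subset_univ _) fun j _ hj => by
    rw [List.count_eq_zero_of_not_mem (by simpa using hj), pow_zero]

lemma degN_wordIndex {i : ℕ} (J : Fin i → Fin p) : degN (wordIndex J) = i := by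
  have := Multiset.sum_count_eq_card (s := Finset.univ) (m := (List.ofFn J : Multiset (Fin p)))
    (by simp)
  simpa [degN, wordIndex] using this

lemma fderiv_eq_sum_pderiv1 (f : (Fin p → ℝ) → ℝ) (x h : Fin p → ℝ) :
    fderiv ℝ f x h = ∑ j, h j * pderiv1 j f x := by
  conv_lhs => rw [pi_eq_sum_univ' h, map_sum]
  exact Finset.sum_congr rfl fun j _ => by rw [map_smul, smul_eq_mul, pderiv1]

lemma hasDerivAt_comp_line {f : (Fin p → ℝ) → ℝ} (hf : Differentiable ℝ f) (c h : Fin p → ℝ)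
    (t : ℝ) :
    HasDerivAt (fun t : ℝ => f (c + t • h)) (∑ j, h j * pderiv1 j f (c + t • h)) t := by
  rw [← fderiv_eq_sum_pderiv1]
  refine (hf _).hasFDerivAt.comp_hasDerivAt t ?_
  simpa using ((hasDerivAt_id t).smul_const h).const_add c

lemma iteratedDeriv_comp_line {f : (Fin p → ℝ) → ℝ} {i : ℕ} (hf : ContDiff ℝ i f)
    (c h : Fin p → ℝ) :
    iteratedDeriv i (fun t : ℝ => f (c + t • h)) =
      fun t => ∑ J : Fin i → Fin p, (∏ l, h (J l)) * wordDeriv (List.ofFn J) f (c + t • h) := by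
  induction i with
  | zero => funext t; simp [wordDeriv]
  | succ i ih =>
    have hdiff (J : Fin i → Fin p) : Differentiable ℝ (wordDeriv (List.ofFn J) f) := by
      refine (contDiff_wordDeriv (List.ofFn J) (k := 1) ?_).differentiable (by simp)
      rwa [List.length_ofFn, add_comm]
    rw [iteratedDeriv_succ, ih (hf.of_le (by simp))]
    funext t
    rw [(HasDerivAt.fun_sum fun J _ =>
      (hasDerivAt_comp_line (hdiff J) c h t).const_mul (∏ l, h (J l))).deriv,
      ← Equiv.sum_comp (Fin.consEquiv fun _ => Fin p), Fintype.sum_prod_type_right]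
    refine Finset.sum_congr rfl fun J _ => ?_
    rw [Finset.mul_sum]
    refine Finset.sum_congr rfl fun j _ => ?_
    simp only [Fin.consEquiv, Equiv.coe_fn_mk, Fin.prod_univ_succ, Fin.cons_zero, Fin.cons_succ,
      List.ofFn_succ, wordDeriv, List.foldr_cons]
    ring

lemma exists_taylor_unitInterval {g : ℝ → ℝ} {r : ℕ} (hg : ContDiff ℝ r g) :
    ∃ t ∈ Set.Icc (0 : ℝ) 1, g 1 =
      ∑ i ∈ Finset.range (r + 1), (i.factorial : ℝ)⁻¹ * iteratedDeriv i g 0 +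
        (r.factorial : ℝ)⁻¹ * (iteratedDeriv r g t - iteratedDeriv r g 0) := by
  cases r with
  | zero => exact ⟨1, by simp, by simp⟩
  | succ n =>
    obtain ⟨t, ht, h⟩ := taylor_mean_remainder_lagrange_iteratedDeriv (f := g) (x := 1) (x₀ := 0)
      (n := n) (by norm_num) (by exact_mod_cast hg.contDiffOn)
    rw [Set.uIoo_of_le zero_le_one] at ht
    have hwithin : ∀ k ∈ Finset.range (n + 1), ((k.factorial : ℝ)⁻¹ * (1 - 0) ^ k) •
        iteratedDerivWithin k g (Set.uIcc 0 1) 0 = (k.factorial : ℝ)⁻¹ * iteratedDeriv k g 0 := by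
      intro k hk
      have hkn : k ≤ n + 1 := (Finset.mem_range.1 hk).le
      rw [iteratedDerivWithin_eq_iteratedDeriv (uniqueDiffOn_uIcc (by norm_num))
        (hg.of_le (by exact_mod_cast hkn)).contDiffAt (by simp)]
      simp
    rw [taylor_within_apply, Finset.sum_congr rfl hwithin, sub_zero, one_pow, mul_one,
      div_eq_inv_mul] at h
    refine ⟨t, ⟨ht.1.le, ht.2.le⟩, ?_⟩
    rw [Finset.sum_range_succ]
    linarith

/-- The homogeneous part of degree `i` of the Taylor expansion, with derivatives at `y`, evaluated
at the increment `h`. -/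
def taylorTerm (f : (Fin p → ℝ) → ℝ) (i : ℕ) (y h : Fin p → ℝ) : ℝ :=
  (i.factorial : ℝ)⁻¹ *
    ∑ J : Fin i → Fin p, (∏ j, h j ^ wordIndex J j) * mderiv (wordIndex J) f y

lemma iteratedDeriv_comp_line_eq_taylorTerm {f : (Fin p → ℝ) → ℝ} {i : ℕ} (hf : ContDiff ℝ i f)
    (c h : Fin p → ℝ) (t : ℝ) :
    (i.factorial : ℝ)⁻¹ * iteratedDeriv i (fun t : ℝ => f (c + t • h)) t =
      taylorTerm f i (c + t • h) h := by
  rw [iteratedDeriv_comp_line hf, taylorTerm]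
  congr 1
  refine Finset.sum_congr rfl fun J _ => ?_
  rw [prod_eq_prod_pow_wordIndex, wordDeriv_eq_mderiv _ (by rwa [List.length_ofFn])]
  rfl

theorem exists_taylor {f : (Fin p → ℝ) → ℝ} {r : ℕ} (hf : ContDiff ℝ r f) (c h : Fin p → ℝ) :
    ∃ t ∈ Set.Icc (0 : ℝ) 1, f (c + h) = ∑ i ∈ Finset.range (r + 1), taylorTerm f i c h +
      (taylorTerm f r (c + t • h) h - taylorTerm f r c h) := by
  obtain ⟨t, ht, h_taylor⟩ := exists_taylor_unitInterval (g := fun t : ℝ => f (c + t • h)) (r := r)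
    (hf.comp (contDiff_const.add (contDiff_id.smul contDiff_const)))
  refine ⟨t, ht, ?_⟩
  have hterm (i : ℕ) (hi : i ≤ r) (t : ℝ) :=
    iteratedDeriv_comp_line_eq_taylorTerm (hf.of_le (by exact_mod_cast hi)) c h t
  rw [one_smul, mul_sub, hterm r le_rfl, hterm r le_rfl, zero_smul, add_zero] at h_taylor
  rw [h_taylor]
  congr 1
  refine Finset.sum_congr rfl fun i hi => ?_
  rw [hterm i (Finset.mem_range_succ_iff.1 hi), zero_smul, add_zero]

/-- The number of words of length `i` with multi-index `s`: it is `i! / s!` when `|s| = i`, and `0`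
otherwise. -/
def wordCount (i : ℕ) (s : Fin p → ℕ) : ℕ := Finset.card {J : Fin i → Fin p | wordIndex J = s}

/-- The coefficient of `(x - c)^s` in the Taylor polynomial of degree `r` of `f` at `c`, that is
`D^s f(c) / s!` if `|s| ≤ r` and `0` otherwise. -/
def taylorCoeff (r : ℕ) (f : (Fin p → ℝ) → ℝ) (c : Fin p → ℝ) (s : Fin p → ℕ) : ℝ :=
  (∑ i ∈ Finset.range (r + 1), (i.factorial : ℝ)⁻¹ * wordCount i s) * mderiv s f c

lemma wordCount_le (i : ℕ) (s : Fin p → ℕ) : wordCount i s ≤ p ^ i :=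
  (Finset.card_le_univ _).trans_eq (by simp)

lemma wordCount_eq_zero {i : ℕ} {s : Fin p → ℕ} (h : degN s ≠ i) : wordCount i s = 0 := by
  refine Finset.card_eq_zero.2 (Finset.filter_eq_empty_iff.2 fun J _ hJ => h ?_)
  rw [← hJ, degN_wordIndex]

lemma sum_wordIndex {i m : ℕ} (him : i ≤ m) (G : (Fin p → ℕ) → ℝ) :
    ∑ J : Fin i → Fin p, G (wordIndex J) =
      ∑ s ∈ mIdx p m, wordCount i (fun j => (s j : ℕ)) * G fun j => (s j : ℕ) := by
  have hle (J : Fin i → Fin p) (j : Fin p) : wordIndex J j < m + 1 := by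
    have : wordIndex J j ≤ degN (wordIndex J) :=
      Finset.single_le_sum (fun _ _ => Nat.zero_le _) (Finset.mem_univ j)
    rw [degN_wordIndex] at this
    omega
  rw [← Finset.sum_fiberwise_of_maps_to (t := mIdx p m)
    (g := fun (J : Fin i → Fin p) j => (⟨wordIndex J j, hle J j⟩ : Fin (m + 1)))]
  · refine Finset.sum_congr rfl fun s _ => ?_
    have hiff (J : Fin i → Fin p) : (fun j => (⟨wordIndex J j, hle J j⟩ : Fin (m + 1))) = s ↔
        wordIndex J = fun j => (s j : ℕ) := by
      simp only [funext_iff, Fin.ext_iff]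
    simp only [hiff]
    rw [Finset.sum_congr rfl fun J hJ => by rw [(Finset.mem_filter.1 hJ).2], Finset.sum_const,
      nsmul_eq_mul, wordCount]
  · intro J _
    exact Finset.mem_filter.2 ⟨Finset.mem_univ _, (degN_wordIndex J).trans_le him⟩

lemma sum_taylorTerm {r m : ℕ} (hrm : r ≤ m) (f : (Fin p → ℝ) → ℝ) (c h : Fin p → ℝ) :
    ∑ i ∈ Finset.range (r + 1), taylorTerm f i c h =
      ∑ s ∈ mIdx p m, taylorCoeff r f c (fun j => (s j : ℕ)) * ∏ j, h j ^ (s j : ℕ) := by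
  simp only [taylorCoeff, Finset.sum_mul]
  rw [Finset.sum_comm]
  refine Finset.sum_congr rfl fun i hi => ?_
  rw [taylorTerm, sum_wordIndex ((Finset.mem_range_succ_iff.1 hi).trans hrm)
    fun s => (∏ j, h j ^ s j) * mderiv s f c, Finset.mul_sum]
  exact Finset.sum_congr rfl fun s _ => by ring

lemma inv_factorial_le_one (i : ℕ) : (i.factorial : ℝ)⁻¹ ≤ 1 :=
  inv_le_one_of_one_le₀ (by exact_mod_cast i.factorial_pos)

lemma abs_taylorCoeff_le {r : ℕ} {f : (Fin p → ℝ) → ℝ} {c : Fin p → ℝ} {b : ℝ} (hb : 0 ≤ b)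
    (hf : ∀ s, degN s ≤ r → |mderiv s f c| ≤ b) (s : Fin p → ℕ) :
    |taylorCoeff r f c s| ≤ (∑ i ∈ Finset.range (r + 1), (p : ℝ) ^ i) * b := by
  have hsum : 0 ≤ ∑ i ∈ Finset.range (r + 1), (i.factorial : ℝ)⁻¹ * wordCount i s := by positivity
  rw [taylorCoeff, abs_mul, abs_of_nonneg hsum]
  by_cases hs : degN s ≤ r
  · refine mul_le_mul (Finset.sum_le_sum fun i _ => ?_) (hf s hs) (abs_nonneg _) (by positivity)
    exact (mul_le_of_le_one_left (Nat.cast_nonneg _) (inv_factorial_le_one i)).trans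
      (by exact_mod_cast wordCount_le i s)
  · rw [Finset.sum_eq_zero fun i hi => ?_, zero_mul]
    · positivity
    · have := Finset.mem_range_succ_iff.1 hi
      rw [wordCount_eq_zero (by omega), Nat.cast_zero, mul_zero]

lemma abs_taylorTerm_sub_le {r : ℕ} {f : (Fin p → ℝ) → ℝ} {y c : Fin p → ℝ} {b : ℝ}
    (hb : ∀ s, degN s = r → |mderiv s f y - mderiv s f c| ≤ b) (h : Fin p → ℝ) :
    |taylorTerm f r y h - taylorTerm f r c h| ≤ p ^ r * (‖h‖ ^ r * b) := by
  have hmonomial (J : Fin r → Fin p) : |∏ j, h j ^ wordIndex J j| ≤ ‖h‖ ^ r := by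
    rw [← prod_eq_prod_pow_wordIndex, Finset.abs_prod]
    exact (Finset.prod_le_prod (fun _ _ => abs_nonneg _)
      fun l _ => norm_le_pi_norm h (J l)).trans_eq (by simp)
  rw [taylorTerm, taylorTerm, ← mul_sub, ← Finset.sum_sub_distrib, abs_mul,
    abs_of_nonneg (by positivity)]
  calc (r.factorial : ℝ)⁻¹ * |_| ≤ |_| :=
        mul_le_of_le_one_left (abs_nonneg _) (inv_factorial_le_one r)
    _ ≤ ∑ _ : Fin r → Fin p, ‖h‖ ^ r * b := by
        refine (Finset.abs_sum_le_sum_abs _ _).trans (Finset.sum_le_sum fun J _ => ?_)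
        rw [← mul_sub, abs_mul]
        exact mul_le_mul (hmonomial J) (hb _ (degN_wordIndex J)) (abs_nonneg _) (by positivity)
    _ = p ^ r * (‖h‖ ^ r * b) := by simp

lemma hOrder_lt {α : ℝ} (hα : 0 < α) : (hOrder α : ℝ) < α := by
  rcases le_total 0 (α - 1) with h | h
  · linarith [Nat.ceil_lt_add_one h, show (hOrder α : ℝ) = (⌈α - 1⌉₊ : ℝ) from rfl]
  · rwa [hOrder, Nat.ceil_eq_zero.2 h, Nat.cast_zero]

lemma eucNorm_le (x : Fin p → ℝ) : eucNorm x ≤ p * ‖x‖ := by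
  have hcoord (j : Fin p) : x j ^ 2 ≤ ‖x‖ ^ 2 := by
    rw [← sq_abs]
    gcongr
    exact norm_le_pi_norm x j
  refine Real.sqrt_le_left (by positivity) |>.2 ?_
  calc ∑ j, x j ^ 2 ≤ ∑ _j : Fin p, ‖x‖ ^ 2 := Finset.sum_le_sum fun j _ => hcoord j
    _ = p * ‖x‖ ^ 2 := by simp
    _ ≤ (p * ‖x‖) ^ 2 := by
      rw [mul_pow]
      gcongr
      exact_mod_cast Nat.le_self_pow two_ne_zero p

lemma convex_cube : Convex ℝ (cube p) := by
  have : cube p = Set.Icc 0 1 := by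
    ext x
    exact ⟨fun h => ⟨fun j => (h j).1, fun j => (h j).2⟩, fun h j => ⟨h.1 j, h.2 j⟩⟩
  exact this ▸ convex_Icc 0 1

lemma IsHolder.exists_abs_mderiv_sub_le {α B : ℝ} {f : (Fin p → ℝ) → ℝ} (hf : IsHolder p α B f)
    (hα : 0 < α) :
    ∃ b, 0 ≤ b ∧ ∀ s, degN s = hOrder α → ∀ c ∈ cube p, ∀ x ∈ cube p, ∀ t ∈ Set.Icc (0 : ℝ) 1,
      |mderiv s f (c + t • (x - c)) - mderiv s f c| ≤ b * ‖x - c‖ ^ (α - hOrder α) := by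
  obtain ⟨-, -, B₂, -, hB₂, -, -, hholder⟩ := hf
  have hα' : 0 ≤ α - hOrder α := sub_nonneg.2 (hOrder_lt hα).le
  refine ⟨B₂ * p ^ (α - hOrder α), by positivity, fun s hs c hc x hx t ht => ?_⟩
  rw [mul_assoc, ← Real.mul_rpow (by positivity) (by positivity)]
  rcases eq_or_ne (c + t • (x - c)) c with hyc | hyc
  · rw [hyc, sub_self, abs_zero]
    positivity
  have hnorm : eucNorm (c + t • (x - c) - c) ≤ p * ‖x - c‖ := by
    refine (eucNorm_le _).trans ?_
    rw [add_sub_cancel_left, norm_smul, Real.norm_of_nonneg ht.1]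
    gcongr
    exact mul_le_of_le_one_left (norm_nonneg _) ht.2
  refine (hs ▸ hholder s hs _ (convex_cube.add_smul_sub_mem hc hx ht) c hc hyc).trans ?_
  gcongr
  exact Real.sqrt_nonneg _

lemma IsHolder.exists_abs_sub_sum_taylorTerm_le {α B : ℝ} {f : (Fin p → ℝ) → ℝ}
    (hf : IsHolder p α B f) (hα : 0 < α) :
    ∃ A, 0 ≤ A ∧ ∀ c ∈ cube p, ∀ x ∈ cube p,
      |f x - ∑ i ∈ Finset.range (hOrder α + 1), taylorTerm f i c (x - c)| ≤ A * ‖x - c‖ ^ α := by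
  obtain ⟨b, hb, hmod⟩ := hf.exists_abs_mderiv_sub_le hα
  refine ⟨p ^ hOrder α * b, by positivity, fun c hc x hx => ?_⟩
  obtain ⟨t, ht, h_taylor⟩ := exists_taylor (f := f) (by exact_mod_cast hf.1) c (x - c)
  rw [add_sub_cancel] at h_taylor
  rw [h_taylor, add_sub_cancel_left]
  refine (abs_taylorTerm_sub_le (fun s hs => hmod s hs c hc x hx t ht) _).trans_eq ?_
  have hsplit : ‖x - c‖ ^ α = ‖x - c‖ ^ hOrder α * ‖x - c‖ ^ (α - hOrder α) := by
    rw [← Real.rpow_natCast, ← Real.rpow_add_of_nonneg (norm_nonneg _) (by positivity)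
      (sub_nonneg.2 (hOrder_lt hα).le), add_sub_cancel]
  rw [hsplit]
  ring

theorem IsHolder.exists_polynomial_approx {m : ℕ} {α B : ℝ} {f : (Fin p → ℝ) → ℝ}
    (hf : IsHolder p α B f) (hα : 0 < α) (hm : α ≤ m + 1) :
    ∃ A : ℝ, 0 ≤ A ∧ ∀ c ∈ cube p, ∃ a : (Fin p → Fin (m + 1)) → ℝ, (∀ s, |a s| ≤ A) ∧
      ∀ x ∈ cube p, |f x - ∑ s ∈ mIdx p m, a s * ∏ j, (x j - c j) ^ (s j : ℕ)|
        ≤ A * ‖x - c‖ ^ α := by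
  have hrm : hOrder α ≤ m := Nat.ceil_le.2 (by linarith)
  obtain ⟨A₂, hA₂, hremainder⟩ := hf.exists_abs_sub_sum_taylorTerm_le hα
  obtain ⟨-, B₁, -, hB₁, -, -, hbound, -⟩ := hf
  set A₁ : ℝ := (∑ i ∈ Finset.range (hOrder α + 1), (p : ℝ) ^ i) * B₁
  have hA₁ : 0 ≤ A₁ := by positivity
  refine ⟨A₁ + A₂, by positivity,
    fun c hc => ⟨fun s => taylorCoeff (hOrder α) f c fun j => (s j : ℕ), fun s => ?_,
      fun x hx => ?_⟩⟩
  · linarith [abs_taylorCoeff_le hB₁ (fun s hs => hbound s hs c hc) fun j => (s j : ℕ)]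
  · calc _ ≤ A₂ * ‖x - c‖ ^ α := by
          simpa only [sum_taylorTerm hrm, Pi.sub_apply] using hremainder c hc x hx
      _ ≤ (A₁ + A₂) * ‖x - c‖ ^ α := by
        gcongr
        linarith

lemma IsHolder.abs_le {α B : ℝ} {f : (Fin p → ℝ) → ℝ} (hf : IsHolder p α B f) {x : Fin p → ℝ}
    (hx : x ∈ cube p) : |f x| ≤ B := by
  obtain ⟨-, B₁, B₂, -, hB₂, hB, hbound, -⟩ := hf
  have hzero : mderiv (fun _ => 0) f = f := by
    rw [mderiv_eq_wordDeriv,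
      show ((List.finRange p).flatMap fun j => List.replicate 0 j) = [] by simp]
    rfl
  have := hbound (fun _ => 0) (by simp [degN]) x hx
  rw [hzero] at this
  linarith

lemma center_mem_cube {K : ℕ} (hK : 0 < K) (k : Fin p → Fin K) : center K k ∈ cube p := by
  intro j
  have : (0 : ℝ) < K := by exact_mod_cast hK
  have hk : ((k j : ℕ) : ℝ) + 1 ≤ K := by exact_mod_cast (k j).2
  refine ⟨by unfold center; positivity, ?_⟩
  rw [center, div_le_one (by positivity)]
  linarith

lemma exists_fin_abs_sub_le {K : ℕ} (hK : 0 < K) {t : ℝ} (ht₀ : 0 ≤ t) (ht₁ : t ≤ 1) :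
    ∃ k : Fin K, |t - (2 * ((k : ℕ) : ℝ) + 1) / (2 * K)| ≤ 1 / (2 * K) := by
  have hK' : (0 : ℝ) < K := by exact_mod_cast hK
  have hceil : ⌈t * K⌉₊ ≤ K := Nat.ceil_le.2 (mul_le_of_le_one_left hK'.le ht₁)
  have hupper : t * K ≤ (⌈t * K⌉₊ - 1 : ℕ) + 1 :=
    (Nat.le_ceil _).trans (by exact_mod_cast le_tsub_add)
  have hlower : ((⌈t * K⌉₊ - 1 : ℕ) : ℝ) ≤ t * K := by
    rcases Nat.eq_zero_or_pos ⌈t * K⌉₊ with h | h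
    · rw [h, Nat.zero_sub, Nat.cast_zero]
      positivity
    · rw [Nat.cast_pred h]
      linarith [Nat.ceil_lt_add_one (show 0 ≤ t * K by positivity)]
  refine ⟨⟨⌈t * K⌉₊ - 1, by omega⟩, ?_⟩
  rw [show t - (2 * ((⌈t * K⌉₊ - 1 : ℕ) : ℝ) + 1) / (2 * K) =
    (2 * (t * K) - (2 * ((⌈t * K⌉₊ - 1 : ℕ) : ℝ) + 1)) / (2 * K) by field_simp,
    abs_div, abs_of_pos (show (0 : ℝ) < 2 * K by positivity)]
  gcongr
  exact abs_le.2 ⟨by linarith, by linarith⟩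

lemma exists_norm_sub_center_le {K : ℕ} (hK : 0 < K) {x : Fin p → ℝ} (hx : x ∈ cube p) :
    ∃ k : Fin p → Fin K, ‖x - center K k‖ ≤ 1 / (2 * K) := by
  choose k hk using fun j => exists_fin_abs_sub_le hK (hx j).1 (hx j).2
  exact ⟨k, (pi_norm_le_iff_of_nonneg (by positivity)).2 hk⟩

section Weight

variable {K : ℕ} {φ : (Fin p → ℝ) → ℝ} {h : ℝ} {μ : (Fin p → Fin K) → Fin p → ℝ}
  {x : Fin p → ℝ} {k : Fin p → Fin K}

lemma norm_sub_div (hh : 0 < h) (y : Fin p → ℝ) : ‖fun j => (x j - y j) / h‖ = ‖x - y‖ / h := by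
  rw [show (fun j => (x j - y j) / h) = h⁻¹ • (x - y) by
    funext j
    simp [div_eq_inv_mul], norm_smul, norm_inv, Real.norm_of_nonneg hh.le, div_eq_inv_mul]

lemma weight_nonneg (hφ : ∀ u, 0 ≤ φ u) : 0 ≤ weight φ K h μ k x :=
  div_nonneg (hφ _) (Finset.sum_nonneg fun _ _ => hφ _)

lemma sum_weight (hφ : ∀ u, 0 ≤ φ u) (hφ_pos : ∀ u, ‖u‖ < 1 → 0 < φ u) (hk : ‖x - μ k‖ < h) :
    ∑ l, weight φ K h μ l x = 1 := by
  have hh : 0 < h := (norm_nonneg _).trans_lt hk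
  unfold weight
  rw [← Finset.sum_div, div_self]
  refine (Finset.sum_pos' (fun _ _ => hφ _) ⟨k, Finset.mem_univ _, hφ_pos _ ?_⟩).ne'
  rwa [norm_sub_div hh, div_lt_one hh]

lemma norm_sub_le_of_weight_ne_zero (hφ_supp : ∀ u, 1 < ‖u‖ → φ u = 0) (hh : 0 < h)
    (hw : weight φ K h μ k x ≠ 0) : ‖x - μ k‖ ≤ h := by
  contrapose! hw
  rw [weight, hφ_supp _ (by rwa [norm_sub_div hh, one_lt_div hh]), zero_div]

lemma abs_kmpFun_sub_le {m : ℕ} {ξ : (Fin p → Fin K) → (Fin p → Fin (m + 1)) → ℝ} {y δ : ℝ}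
    (hw : ∀ k, 0 ≤ weight φ K h μ k x) (hsum : ∑ k, weight φ K h μ k x = 1)
    (hlocal : ∀ k, weight φ K h μ k x ≠ 0 → |∑ s ∈ mIdx p m, ξ k s * mono K m k s x - y| ≤ δ) :
    |kmpFun φ K m h μ ξ x - y| ≤ δ := by
  have hmix : kmpFun φ K m h μ ξ x =
      ∑ k, weight φ K h μ k x • ∑ s ∈ mIdx p m, ξ k s * mono K m k s x := by
    simp only [kmpFun, smul_eq_mul, Finset.mul_sum]
    exact Finset.sum_congr rfl fun k _ => Finset.sum_congr rfl fun s _ => by ring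
  rw [hmix, ← Real.dist_eq, ← Metric.mem_closedBall, ← finsum_eq_sum_of_fintype]
  exact (convex_closedBall y δ).finsum_mem hw (by rwa [finsum_eq_sum_of_fintype]) hlocal

end Weight

theorem IsHolder.exists_kmpFun_approx {m : ℕ} {α B : ℝ} {f : (Fin p → ℝ) → ℝ}
    (hf : IsHolder p α B f) (hα : 0 < α) (hm : α ≤ m + 1) {φ : (Fin p → ℝ) → ℝ}
    (hφ : ∀ u, 0 ≤ φ u) (hφ_supp : ∀ u, 1 < ‖u‖ → φ u = 0) (hφ_pos : ∀ u, ‖u‖ < 1 → 0 < φ u) :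
    ∃ A : ℝ, 0 ≤ A ∧ ∀ (K : ℕ) (h : ℝ), 0 < K → 1 / (2 * K) < h →
      ∃ ξ : (Fin p → Fin K) → (Fin p → Fin (m + 1)) → ℝ, (∀ k s, |ξ k s| ≤ A) ∧
        ∀ x ∈ cube p, |kmpFun φ K m h (center K) ξ x - f x| ≤ A * h ^ α := by
  obtain ⟨A, hA, hpoly⟩ := hf.exists_polynomial_approx hα hm
  refine ⟨A, hA, fun K h hK hKh => ?_⟩
  have hh : 0 < h := lt_of_le_of_lt (by positivity) hKh
  choose ξ hξ hξ_approx using fun k : Fin p → Fin K => hpoly _ (center_mem_cube hK k)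
  refine ⟨ξ, hξ, fun x hx => ?_⟩
  obtain ⟨k, hk⟩ := exists_norm_sub_center_le hK hx
  refine abs_kmpFun_sub_le (fun _ => weight_nonneg hφ) (sum_weight hφ hφ_pos (hk.trans_lt hKh))
    fun l hl => ?_
  rw [abs_sub_comm]
  refine (hξ_approx l x hx).trans ?_
  gcongr
  exact norm_sub_le_of_weight_ne_zero hφ_supp hh hl

section LeastSquares

variable {E H : Type*} [NormedAddCommGroup E] [NormedSpace ℝ E] [FiniteDimensional ℝ E]
  [NormedAddCommGroup H] [InnerProductSpace ℝ H] (Φ : E →ₗ[ℝ] H) (Z : H)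

/-- The fitted value of the least squares problem `min_x ‖Z - Φ x‖`. -/
def lsFit : H := (LinearMap.range Φ).starProjection Z

lemma norm_sub_sq_eq_lsFit (x : E) :
    ‖Z - Φ x‖ ^ 2 = ‖Z - lsFit Φ Z‖ ^ 2 + ‖Φ x - lsFit Φ Z‖ ^ 2 := by
  rw [norm_sub_rev (Φ x), ← sub_add_sub_cancel Z (lsFit Φ Z) (Φ x), sq, sq, sq]
  refine norm_add_sq_eq_norm_sq_add_norm_sq_real ?_
  exact Submodule.starProjection_inner_eq_zero (K := LinearMap.range Φ) Z _
    (sub_mem (Submodule.starProjection_apply_mem _ Z) (LinearMap.mem_range_self Φ x))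

lemma norm_lsFit_sub_le (x : E) : ‖lsFit Φ Z - Z‖ ≤ ‖Φ x - Z‖ := by
  rw [norm_sub_rev, norm_sub_rev (Φ x)]
  refine le_of_sq_le_sq ?_ (norm_nonneg _)
  rw [norm_sub_sq_eq_lsFit Φ Z x]
  exact le_add_of_nonneg_right (sq_nonneg _)

lemma norm_lsFit_sq :
    ‖lsFit Φ Z‖ ^ 2 =
      ∑ i, inner ℝ (stdOrthonormalBasis ℝ (LinearMap.range Φ) i : H) Z ^ 2 := by
  have hcoord (i) : inner ℝ (stdOrthonormalBasis ℝ (LinearMap.range Φ) i : H) Z =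
      inner ℝ (stdOrthonormalBasis ℝ (LinearMap.range Φ) i)
        ((LinearMap.range Φ).orthogonalProjectionOnto Z) := by
    rw [← Submodule.inner_orthogonalProjectionOnto_eq_of_mem_left]
  simp only [hcoord, OrthonormalBasis.sum_sq_inner_right]
  rfl

lemma norm_sub_sq_le_of_noise (Zf Ze : H) (x xs : E) :
    ‖Φ x - Zf‖ ^ 2 ≤ 3 * (‖Φ x - lsFit Φ (Zf + Ze)‖ ^ 2 + ‖lsFit Φ Ze‖ ^ 2 + ‖Φ xs - Zf‖ ^ 2) := by
  have hsum : lsFit Φ (Zf + Ze) = lsFit Φ Zf + lsFit Φ Ze := map_add _ _ _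
  have htriangle : ‖Φ x - Zf‖ ≤ ‖Φ x - lsFit Φ (Zf + Ze)‖ + ‖lsFit Φ Ze‖ + ‖lsFit Φ Zf - Zf‖ := by
    refine (congrArg norm ?_).trans_le norm_add₃_le
    rw [hsum]
    abel
  have := norm_lsFit_sub_le Φ Zf xs
  calc ‖Φ x - Zf‖ ^ 2 ≤ (‖Φ x - lsFit Φ (Zf + Ze)‖ + ‖lsFit Φ Ze‖ + ‖Φ xs - Zf‖) ^ 2 := by
        gcongr
        linarith
    _ ≤ _ := by
        linarith [sq_nonneg (‖Φ x - lsFit Φ (Zf + Ze)‖ - ‖lsFit Φ Ze‖),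
          sq_nonneg (‖Φ x - lsFit Φ (Zf + Ze)‖ - ‖Φ xs - Zf‖),
          sq_nonneg (‖lsFit Φ Ze‖ - ‖Φ xs - Zf‖)]

variable [MeasurableSpace E] [BorelSpace E] (μ : Measure E) [μ.IsAddHaarMeasure]

lemma lintegral_eq_mul_lintegral_smul (f : E → ℝ≥0∞) {r : ℝ} (hr : 0 < r) :
    ∫⁻ x, f x ∂μ = ENNReal.ofReal (r ^ Module.finrank ℝ E) * ∫⁻ x, f (r • x) ∂μ := by
  have hmap : ∫⁻ x, f x ∂(Measure.map (r • ·) μ) = ∫⁻ x, f (r • x) ∂μ :=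
    (Homeomorph.smulOfNeZero r hr.ne').measurableEmbedding.lintegral_map f
  rw [← hmap, Measure.map_addHaar_smul μ hr.ne', lintegral_smul_measure, smul_eq_mul, ← mul_assoc,
    ← ENNReal.ofReal_mul (by positivity), abs_of_pos (by positivity),
    mul_inv_cancel₀ (by positivity), ENNReal.ofReal_one, one_mul]

lemma lintegral_exp_neg_norm_sub_lsFit {v : ℝ} (hv : 0 < v) :
    ∫⁻ x, ENNReal.ofReal (exp (-‖Φ x - lsFit Φ Z‖ ^ 2 / (2 * v))) ∂μ =
      ENNReal.ofReal (√v ^ Module.finrank ℝ E) *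
        ∫⁻ x, ENNReal.ofReal (exp (-‖Φ x‖ ^ 2 / 2)) ∂μ := by
  obtain ⟨x₀, hx₀⟩ : lsFit Φ Z ∈ LinearMap.range Φ := Submodule.starProjection_apply_mem _ Z
  simp only [← hx₀, ← map_sub]
  rw [lintegral_sub_right_eq_self (fun x => ENNReal.ofReal (exp (-‖Φ x‖ ^ 2 / (2 * v)))) x₀,
    lintegral_eq_mul_lintegral_smul μ _ (Real.sqrt_pos.2 hv)]
  congr 1
  refine lintegral_congr fun x => ?_
  rw [map_smul, norm_smul, mul_pow, Real.norm_of_nonneg (Real.sqrt_nonneg v), Real.sq_sqrt hv.le]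
  congr 2
  field_simp

lemma lintegral_exp_neg_norm_sub {v : ℝ} (hv : 0 < v) :
    ∫⁻ x, ENNReal.ofReal (exp (-‖Z - Φ x‖ ^ 2 / (2 * v))) ∂μ =
      ENNReal.ofReal (exp (-‖Z - lsFit Φ Z‖ ^ 2 / (2 * v)) * √v ^ Module.finrank ℝ E) *
        ∫⁻ x, ENNReal.ofReal (exp (-‖Φ x‖ ^ 2 / 2)) ∂μ := by
  have hsplit (x : E) : ENNReal.ofReal (exp (-‖Z - Φ x‖ ^ 2 / (2 * v))) =
      ENNReal.ofReal (exp (-‖Z - lsFit Φ Z‖ ^ 2 / (2 * v))) *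
        ENNReal.ofReal (exp (-‖Φ x - lsFit Φ Z‖ ^ 2 / (2 * v))) := by
    rw [← ENNReal.ofReal_mul (by positivity), ← Real.exp_add, norm_sub_sq_eq_lsFit, neg_add,
      add_div]
  simp only [hsplit]
  rw [lintegral_const_mul' _ _ ENNReal.ofReal_ne_top, lintegral_exp_neg_norm_sub_lsFit Φ Z μ hv,
    ENNReal.ofReal_mul (by positivity), mul_assoc]

/-- Chernoff's bound: half of the exponent is traded for the factor `exp (-T / (4 * v))`. -/
lemma setLIntegral_exp_neg_norm_sub_le {v T : ℝ} (hv : 0 < v) :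
    ∫⁻ x in {x | T < ‖Φ x - lsFit Φ Z‖ ^ 2}, ENNReal.ofReal (exp (-‖Z - Φ x‖ ^ 2 / (2 * v))) ∂μ ≤
      ENNReal.ofReal (exp (-T / (4 * v)) * √2 ^ Module.finrank ℝ E) *
        ∫⁻ x, ENNReal.ofReal (exp (-‖Z - Φ x‖ ^ 2 / (2 * v))) ∂μ := by
  have hΦ : Continuous Φ := Φ.continuous_of_finiteDimensional
  have htail : ∀ x ∈ {x | T < ‖Φ x - lsFit Φ Z‖ ^ 2},
      ENNReal.ofReal (exp (-‖Z - Φ x‖ ^ 2 / (2 * v))) ≤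
        ENNReal.ofReal (exp (-T / (4 * v)) * exp (-‖Z - lsFit Φ Z‖ ^ 2 / (2 * v))) *
          ENNReal.ofReal (exp (-‖Φ x - lsFit Φ Z‖ ^ 2 / (2 * (2 * v)))) := by
    intro x hx
    rw [← ENNReal.ofReal_mul (by positivity), ← Real.exp_add, ← Real.exp_add,
      norm_sub_sq_eq_lsFit Φ Z x]
    gcongr
    have hle : -‖Φ x - lsFit Φ Z‖ ^ 2 / (4 * v) ≤ -T / (4 * v) := by
      gcongr
      exact hx.le
    have hhalf : -‖Φ x - lsFit Φ Z‖ ^ 2 / (2 * v) =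
        -‖Φ x - lsFit Φ Z‖ ^ 2 / (4 * v) + -‖Φ x - lsFit Φ Z‖ ^ 2 / (2 * (2 * v)) := by
      field_simp
      ring
    rw [neg_add, add_div, hhalf]
    linarith
  have hmeas : Measurable fun x => ‖Φ x - lsFit Φ Z‖ ^ 2 :=
    ((hΦ.sub continuous_const).norm.pow 2).measurable
  refine (setLIntegral_mono' (measurableSet_lt measurable_const hmeas) htail).trans
    ((setLIntegral_le_lintegral _ _).trans_eq ?_)
  rw [lintegral_const_mul' _ _ ENNReal.ofReal_ne_top,
    lintegral_exp_neg_norm_sub_lsFit Φ Z μ (by positivity : 0 < 2 * v),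
    lintegral_exp_neg_norm_sub Φ Z μ hv, ← mul_assoc, ← mul_assoc,
    ← ENNReal.ofReal_mul (by positivity), ← ENNReal.ofReal_mul (by positivity),
    Real.sqrt_mul zero_le_two, mul_pow]
  congr 2
  ring

end LeastSquares

/-- The unnormalised inverse-Gamma density with shape `s` and rate `S / 2`. -/
def invGammaKernel (s S v : ℝ) : ℝ := v ^ (-s - 1) * exp (-S / (2 * v))

lemma invGammaKernel_nonneg (s S : ℝ) {v : ℝ} (hv : 0 ≤ v) : 0 ≤ invGammaKernel s S v := by
  unfold invGammaKernel
  positivity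

lemma measurable_invGammaKernel (s S : ℝ) : Measurable (invGammaKernel s S) := by
  unfold invGammaKernel
  fun_prop

lemma invGammaKernel_mul_sqrt_pow (s S : ℝ) (d : ℕ) {v : ℝ} (hv : 0 < v) :
    invGammaKernel s S v * √v ^ d = invGammaKernel (s - d / 2) S v := by
  have hpow : v ^ (-(s - d / 2) - 1) = v ^ (-s - 1) * √v ^ d := by
    rw [Real.sqrt_eq_rpow, ← Real.rpow_natCast, ← Real.rpow_mul hv.le, ← Real.rpow_add hv]
    congr 1
    ring
  rw [invGammaKernel, invGammaKernel, hpow, mul_right_comm]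

lemma invGammaKernel_mul_inv_sqrt_pow (s S : ℝ) (d : ℕ) {v : ℝ} (hv : 0 < v) :
    invGammaKernel s S v * (√v)⁻¹ ^ d = invGammaKernel (s + d / 2) S v := by
  have hpow := invGammaKernel_mul_sqrt_pow (s + d / 2) S d hv
  rw [add_sub_cancel_right] at hpow
  rw [← hpow, inv_pow, mul_inv_cancel_right₀ (pow_pos (Real.sqrt_pos.2 hv) d).ne']

lemma invGammaKernel_mul_exp (s S Q v : ℝ) :
    invGammaKernel s S v * exp (-Q / (2 * v)) = invGammaKernel s (S + Q) v := by
  rw [invGammaKernel, invGammaKernel, neg_add, add_div, Real.exp_add, mul_assoc]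

lemma two_mul_invGammaKernel_two_mul_le {s S V v : ℝ} (hS : 0 ≤ S) (hV : 0 < V) (hv : V < 2 * v) :
    2 * invGammaKernel s S (2 * v) ≤ 2 ^ (-s) * exp (S / (2 * V)) * invGammaKernel s S v := by
  have hv₀ : 0 < v := by linarith
  have hexp : exp (-S / (2 * (2 * v))) ≤ exp (S / (2 * V)) * exp (-S / (2 * v)) := by
    rw [← Real.exp_add, Real.exp_le_exp]
    have hle : S / (2 * (2 * v)) ≤ S / (2 * V) := by gcongr
    have hhalf : S / (2 * v) = 2 * (S / (2 * (2 * v))) := by field_simp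
    rw [neg_div, neg_div]
    linarith
  have hpow : 2 * (2 * v) ^ (-s - 1) = 2 ^ (-s) * v ^ (-s - 1) := by
    rw [Real.mul_rpow zero_le_two hv₀.le, Real.rpow_sub_one two_ne_zero]
    ring
  calc 2 * invGammaKernel s S (2 * v) = 2 ^ (-s) * v ^ (-s - 1) * exp (-S / (2 * (2 * v))) := by
        rw [← hpow, invGammaKernel, mul_assoc]
    _ ≤ 2 ^ (-s) * v ^ (-s - 1) * (exp (S / (2 * V)) * exp (-S / (2 * v))) := by gcongr
    _ = _ := by
        rw [invGammaKernel]
        ring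

lemma lintegral_Ioi_invGammaKernel_le {s S V : ℝ} (hS : 0 ≤ S) (hV : 0 < V) :
    ∫⁻ v in Set.Ioi V, ENNReal.ofReal (invGammaKernel s S v) ≤
      ENNReal.ofReal (2 ^ (-s) * exp (S / (2 * V))) *
        ∫⁻ v in Set.Ioi 0, ENNReal.ofReal (invGammaKernel s S v) := by
  rw [← lintegral_indicator measurableSet_Ioi, ← lintegral_indicator measurableSet_Ioi,
    lintegral_eq_mul_lintegral_smul volume _ zero_lt_two,
    ← lintegral_const_mul' _ _ ENNReal.ofReal_ne_top,
    ← lintegral_const_mul' _ _ ENNReal.ofReal_ne_top]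
  refine lintegral_mono fun v => ?_
  simp only [smul_eq_mul, Module.finrank_self, pow_one]
  by_cases hv : V < 2 * v
  · rw [Set.indicator_of_mem (Set.mem_Ioi.2 hv), Set.indicator_of_mem (Set.mem_Ioi.2 (by linarith)),
      ← ENNReal.ofReal_mul zero_le_two, ← ENNReal.ofReal_mul (by positivity)]
    exact ENNReal.ofReal_le_ofReal (two_mul_invGammaKernel_two_mul_le hS hV hv)
  · rw [Set.indicator_of_notMem (by exact hv), mul_zero]
    exact zero_le

section NormalInverseGamma

variable {E H : Type*} [NormedAddCommGroup E] [NormedSpace ℝ E] [FiniteDimensional ℝ E]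
  [MeasurableSpace E] [BorelSpace E] [NormedAddCommGroup H] [InnerProductSpace ℝ H]
  (Φ : E →ₗ[ℝ] H) (Z : H) (μ : Measure E) [μ.IsAddHaarMeasure] {s b T V : ℝ}

lemma invGammaKernel_mul_lintegral_exp {v : ℝ} (hv : 0 < v) :
    ENNReal.ofReal (invGammaKernel s b v) *
        ∫⁻ x, ENNReal.ofReal (exp (-‖Z - Φ x‖ ^ 2 / (2 * v))) ∂μ =
      ENNReal.ofReal (invGammaKernel (s - Module.finrank ℝ E / 2) (b + ‖Z - lsFit Φ Z‖ ^ 2) v) *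
        ∫⁻ x, ENNReal.ofReal (exp (-‖Φ x‖ ^ 2 / 2)) ∂μ := by
  rw [lintegral_exp_neg_norm_sub Φ Z μ hv, ← mul_assoc,
    ← ENNReal.ofReal_mul (invGammaKernel_nonneg _ _ hv.le), ← mul_assoc, invGammaKernel_mul_exp,
    invGammaKernel_mul_sqrt_pow _ _ _ hv]

lemma setLIntegral_Ioi_invGammaKernel_mul_le (hb : 0 ≤ b) (hV : 0 < V) :
    ∫⁻ v in Set.Ioi V, ENNReal.ofReal (invGammaKernel s b v) *
        ∫⁻ x, ENNReal.ofReal (exp (-‖Z - Φ x‖ ^ 2 / (2 * v))) ∂μ ≤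
      ENNReal.ofReal (2 ^ (-(s - Module.finrank ℝ E / 2)) *
          exp ((b + ‖Z - lsFit Φ Z‖ ^ 2) / (2 * V))) *
        ∫⁻ v in Set.Ioi 0, ENNReal.ofReal (invGammaKernel s b v) *
          ∫⁻ x, ENNReal.ofReal (exp (-‖Z - Φ x‖ ^ 2 / (2 * v))) ∂μ := by
  have hmarginal {t : ℝ} (ht : 0 ≤ t) : ∫⁻ v in Set.Ioi t, ENNReal.ofReal (invGammaKernel s b v) *
      ∫⁻ x, ENNReal.ofReal (exp (-‖Z - Φ x‖ ^ 2 / (2 * v))) ∂μ =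
        (∫⁻ v in Set.Ioi t, ENNReal.ofReal
          (invGammaKernel (s - Module.finrank ℝ E / 2) (b + ‖Z - lsFit Φ Z‖ ^ 2) v)) *
            ∫⁻ x, ENNReal.ofReal (exp (-‖Φ x‖ ^ 2 / 2)) ∂μ := by
    rw [← lintegral_mul_const _ (measurable_invGammaKernel _ _).ennreal_ofReal]
    exact setLIntegral_congr_fun measurableSet_Ioi fun v hv =>
      invGammaKernel_mul_lintegral_exp Φ Z μ (ht.trans_lt hv)
  rw [hmarginal le_rfl, hmarginal hV.le, ← mul_assoc]
  gcongr
  exact lintegral_Ioi_invGammaKernel_le (by positivity) hV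

/-- Above `V` the inverse-Gamma tail is small; below `V` the Gaussian tail is. -/
theorem lintegral_normalInverseGamma_tail_le (hb : 0 ≤ b) (hV : 0 < V) (hT : 0 ≤ T) :
    ∫⁻ v in Set.Ioi 0, ENNReal.ofReal (invGammaKernel s b v) *
        ∫⁻ x in {x | T < ‖Φ x - lsFit Φ Z‖ ^ 2},
          ENNReal.ofReal (exp (-‖Z - Φ x‖ ^ 2 / (2 * v))) ∂μ ≤
      ENNReal.ofReal (2 ^ (-(s - Module.finrank ℝ E / 2)) *
          exp ((b + ‖Z - lsFit Φ Z‖ ^ 2) / (2 * V)) +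
            exp (-T / (4 * V)) * √2 ^ Module.finrank ℝ E) *
        ∫⁻ v in Set.Ioi 0, ENNReal.ofReal (invGammaKernel s b v) *
          ∫⁻ x, ENNReal.ofReal (exp (-‖Z - Φ x‖ ^ 2 / (2 * v))) ∂μ := by
  rw [ENNReal.ofReal_add (by positivity) (by positivity), add_mul, ← Set.Ioc_union_Ioi_eq_Ioi hV.le,
    lintegral_union measurableSet_Ioi (Set.Ioc_disjoint_Ioi le_rfl), Set.Ioc_union_Ioi_eq_Ioi hV.le,
    add_comm]
  refine add_le_add ((lintegral_mono fun v => ?_).trans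
    (setLIntegral_Ioi_invGammaKernel_mul_le Φ Z μ hb hV)) ?_
  · exact mul_le_mul_right (setLIntegral_le_lintegral _ _) _
  rw [← lintegral_const_mul' _ _ ENNReal.ofReal_ne_top]
  refine (setLIntegral_mono' measurableSet_Ioc fun v hv => ?_).trans
    (lintegral_mono_set Set.Ioc_subset_Ioi_self)
  rw [mul_left_comm]
  refine mul_le_mul_right ((setLIntegral_exp_neg_norm_sub_le Φ Z μ hv.1).trans
    (mul_le_mul_left ?_ _)) _
  have hv₀ : 0 < v := hv.1
  have hv₁ : v ≤ V := hv.2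
  gcongr ENNReal.ofReal (exp ?_ * _)
  rw [neg_div, neg_div]
  gcongr

end NormalInverseGamma

lemma pi_withDensity_ofReal {ι X : Type*} [Fintype ι] [MeasurableSpace X] (μ : Measure X)
    [SigmaFinite μ] {f : X → ℝ} (hf₀ : ∀ x, 0 ≤ f x) (hf : Integrable f μ) :
    Measure.pi (fun _ : ι => μ.withDensity fun x => ENNReal.ofReal (f x)) =
      (Measure.pi fun _ : ι => μ).withDensity fun x => ENNReal.ofReal (∏ i, f (x i)) := by
  have : IsFiniteMeasure (μ.withDensity fun x => ENNReal.ofReal (f x)) :=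
    isFiniteMeasure_withDensity_ofReal hf.2
  refine Measure.pi_eq fun s hs => ?_
  have hint : Integrable (fun x : ι → X => ∏ i, f (x i)) (Measure.pi fun i => μ.restrict (s i)) :=
    Integrable.fintype_prod fun i => hf.restrict
  rw [withDensity_apply _ (MeasurableSet.univ_pi hs), Measure.restrict_pi_pi,
    ← ofReal_integral_eq_lintegral_ofReal hint (.of_forall fun x => Finset.prod_nonneg
      fun i _ => hf₀ _), integral_fintype_prod_eq_prod (f := fun _ => f),
    ENNReal.ofReal_prod_of_nonneg fun i _ => integral_nonneg hf₀]
  refine Finset.prod_congr rfl fun i _ => ?_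
  rw [withDensity_apply _ (hs i), ofReal_integral_eq_lintegral_ofReal hf.restrict (.of_forall hf₀)]

section Prior

variable (κ τ : Type*) [Fintype κ] [Fintype τ]

/-- The prior of the coefficients given the noise variance: i.i.d. centered normals of variance
`w`. -/
def condPrior (w : ℝ) : Measure (κ → τ → ℝ) :=
  Measure.pi fun _ : κ => Measure.pi fun _ : τ =>
    ProbabilityTheory.gaussianReal 0 (Real.toNNReal w)

instance (w : ℝ) : IsProbabilityMeasure (condPrior κ τ w) := by
  unfold condPrior
  infer_instance

lemma condPrior_eq_withDensity {w : ℝ} (hw : 0 < w) :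
    condPrior κ τ w = (volume : Measure (κ → τ → ℝ)).withDensity fun ξ =>
      ENNReal.ofReal (∏ k, ∏ t, ProbabilityTheory.gaussianPDFReal 0 (Real.toNNReal w) (ξ k t)) := by
  have hnonneg := ProbabilityTheory.gaussianPDFReal_nonneg 0 (Real.toNNReal w)
  have hint := ProbabilityTheory.integrable_gaussianPDFReal 0 (Real.toNNReal w)
  rw [condPrior, ProbabilityTheory.gaussianReal_of_var_ne_zero 0 (Real.toNNReal_pos.2 hw).ne']
  unfold ProbabilityTheory.gaussianPDF
  rw [pi_withDensity_ofReal _ hnonneg hint, pi_withDensity_ofReal _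
    (fun _ => Finset.prod_nonneg fun _ _ => hnonneg _) (Integrable.fintype_prod fun _ => hint)]
  rfl

lemma condPrior_eq_map_smul (w : ℝ) :
    condPrior κ τ w = (condPrior κ τ 1).map fun ξ => √w • ξ := by
  have hscale : ProbabilityTheory.gaussianReal 0 (Real.toNNReal w) =
      (ProbabilityTheory.gaussianReal 0 (Real.toNNReal 1)).map (√w * ·) := by
    rw [ProbabilityTheory.gaussianReal_map_const_mul, mul_zero, Real.toNNReal_one, mul_one]
    congr 1
    ext
    simp [Real.sq_sqrt', Real.coe_toNNReal']
  have hτ : (Measure.pi fun _ : τ => ProbabilityTheory.gaussianReal 0 (Real.toNNReal w)) =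
      (Measure.pi fun _ : τ => ProbabilityTheory.gaussianReal 0 (Real.toNNReal 1)).map
        fun x t => √w * x t := by
    rw [hscale, Measure.pi_map_pi fun t => (measurable_const_mul _).aemeasurable]
  rw [condPrior, hτ, ← Measure.pi_map_pi fun k =>
    (measurable_pi_lambda _ fun t => (measurable_pi_apply t).const_mul _).aemeasurable]
  rfl

/-- The hierarchical prior: `v ~ πv` and, given `v`, coefficients of variance `s² v`. -/
def hierPrior (s : ℝ) (πv : Measure ℝ) : Measure ((κ → τ → ℝ) × ℝ) :=
  πv.bind fun v => (condPrior κ τ (s ^ 2 * v)).prod (Measure.dirac v)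

variable {κ τ}

lemma measurable_condPrior_prod_dirac (s : ℝ) :
    Measurable fun v => (condPrior κ τ (s ^ 2 * v)).prod (Measure.dirac v) := by
  refine Measure.measurable_of_measurable_coe _ fun A hA => ?_
  let g : ℝ × (κ → τ → ℝ) → (κ → τ → ℝ) × ℝ := fun z => (√(s ^ 2 * z.1) • z.2, z.1)
  have hg : Measurable g := by fun_prop
  have happly (v : ℝ) : (condPrior κ τ (s ^ 2 * v)).prod (Measure.dirac v) A =
      condPrior κ τ 1 (Prod.mk v ⁻¹' (g ⁻¹' A)) := by
    rw [Measure.prod_dirac, condPrior_eq_map_smul, Measure.map_map (by fun_prop) (by fun_prop),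
      Measure.map_apply (by fun_prop) hA]
    rfl
  simp only [happly]
  exact measurable_measure_prodMk_left (hg hA)

lemma lintegral_hierPrior (s : ℝ) (πv : Measure ℝ) {F : (κ → τ → ℝ) × ℝ → ℝ≥0∞}
    (hF : Measurable F) :
    ∫⁻ θ, F θ ∂(hierPrior κ τ s πv) = ∫⁻ v, ∫⁻ ξ, F (ξ, v) ∂(condPrior κ τ (s ^ 2 * v)) ∂πv := by
  rw [hierPrior, Measure.lintegral_bind (measurable_condPrior_prod_dirac s).aemeasurable
    hF.aemeasurable]
  refine lintegral_congr fun v => ?_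
  rw [Measure.prod_dirac, lintegral_map hF (by fun_prop)]

end Prior

section Posterior

lemma postGen_le_of_lintegral_le {Θ : Type*} [MeasurableSpace Θ] {prior : Measure Θ} {L : Θ → ℝ}
    {A : Set Θ} {ρ : ℝ} (hL₀ : ∀ θ, 0 ≤ L θ) (hL : Measurable L) (hρ : 0 ≤ ρ)
    (hA : ∫⁻ θ in A, ENNReal.ofReal (L θ) ∂prior ≤
      ENNReal.ofReal ρ * ∫⁻ θ, ENNReal.ofReal (L θ) ∂prior) :
    postGen prior L A ≤ ρ := by
  rw [postGen, integral_eq_lintegral_of_nonneg_ae (.of_forall hL₀) hL.aestronglyMeasurable,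
    integral_eq_lintegral_of_nonneg_ae (.of_forall hL₀) hL.aestronglyMeasurable]
  obtain htop | hfin := eq_or_ne (∫⁻ θ, ENNReal.ofReal (L θ) ∂prior) ∞
  · rwa [htop, ENNReal.toReal_top, div_zero]
  refine div_le_of_le_mul₀ ENNReal.toReal_nonneg hρ ?_
  rw [← ENNReal.toReal_ofReal hρ, ← ENNReal.toReal_mul]
  exact ENNReal.toReal_mono (ENNReal.mul_ne_top ENNReal.ofReal_ne_top hfin) hA

variable {ι κ τ : Type*}

/-- The design augmented by one pseudo-observation `r * ξ k t` per coefficient, which turns the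
ridge penalty of the prior into a part of the residual sum of squares. -/
def augDesign (Ψ : (κ → τ → ℝ) →ₗ[ℝ] ι → ℝ) (r : ℝ) :
    (κ → τ → ℝ) →ₗ[ℝ] EuclideanSpace ℝ (ι ⊕ κ × τ) where
  toFun ξ := WithLp.toLp 2 (Sum.elim (Ψ ξ) fun kt => r * ξ kt.1 kt.2)
  map_add' ξ η := by
    ext i
    cases i <;> simp [mul_add]
  map_smul' c ξ := by
    ext i
    cases i <;> simp [mul_left_comm]

/-- The response augmented by zero pseudo-observations. -/
def augResponse (κ τ : Type*) (y : ι → ℝ) : EuclideanSpace ℝ (ι ⊕ κ × τ) :=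
  WithLp.toLp 2 (Sum.elim y 0)

lemma augResponse_add (y e : ι → ℝ) :
    augResponse κ τ (y + e) = augResponse κ τ y + augResponse κ τ e := by
  ext i
  cases i <;> simp [augResponse]

variable [Fintype ι]

/-- The Gaussian likelihood of the linear model `y = Ψ ξ + noise` with noise variance `v`. -/
def gaussLik (Ψ : (κ → τ → ℝ) →ₗ[ℝ] ι → ℝ) (y : ι → ℝ) (θ : (κ → τ → ℝ) × ℝ) : ℝ :=
  ∏ i, gaussD (√θ.2) (y i - Ψ θ.1 i)

variable (Ψ : (κ → τ → ℝ) →ₗ[ℝ] ι → ℝ) (y : ι → ℝ)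

lemma gaussLik_nonneg (θ : (κ → τ → ℝ) × ℝ) : 0 ≤ gaussLik Ψ y θ :=
  Finset.prod_nonneg fun i _ => by
    unfold gaussD
    positivity

variable [Fintype κ] [Fintype τ]

lemma norm_augResponse_sub_sq (r : ℝ) (ξ : κ → τ → ℝ) :
    ‖augResponse κ τ y - augDesign Ψ r ξ‖ ^ 2 =
      ∑ i, (y i - Ψ ξ i) ^ 2 + r ^ 2 * ∑ k, ∑ t, ξ k t ^ 2 := by
  rw [EuclideanSpace.real_norm_sq_eq, Fintype.sum_sum_type, Fintype.sum_prod_type]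
  simp [augResponse, augDesign, mul_pow, Finset.mul_sum]

lemma measurable_gaussLik : Measurable (gaussLik Ψ y) := by
  have hΨ : Continuous Ψ := Ψ.continuous_of_finiteDimensional
  unfold gaussLik gaussD
  fun_prop

lemma prior_density_mul_gaussLik {s v : ℝ} (hs : 0 < s) (hv : 0 < v) (ξ : κ → τ → ℝ) :
    (∏ k, ∏ t, ProbabilityTheory.gaussianPDFReal 0 (Real.toNNReal (s ^ 2 * v)) (ξ k t)) *
        gaussLik Ψ y (ξ, v) =
      (√(2 * π))⁻¹ ^ Fintype.card ι * (√(2 * π) * s)⁻¹ ^ (Fintype.card κ * Fintype.card τ) *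
        (√v)⁻¹ ^ (Fintype.card ι + Fintype.card κ * Fintype.card τ) *
          exp (-‖augResponse κ τ y - augDesign Ψ s⁻¹ ξ‖ ^ 2 / (2 * v)) := by
  have hsqrt : √(2 * π * (s ^ 2 * v)) = √(2 * π) * s * √v := by
    rw [Real.sqrt_mul (by positivity : 0 ≤ 2 * π), Real.sqrt_mul (by positivity : 0 ≤ s ^ 2),
      Real.sqrt_sq hs.le, mul_assoc]
  have hexp : -‖augResponse κ τ y - augDesign Ψ s⁻¹ ξ‖ ^ 2 / (2 * v) =
      ∑ k, ∑ t, -ξ k t ^ 2 / (2 * (s ^ 2 * v)) + ∑ i, -(y i - Ψ ξ i) ^ 2 / (2 * v) := by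
    simp only [norm_augResponse_sub_sq, ← Finset.sum_div, Finset.sum_neg_distrib]
    field_simp
    ring
  have hw : 0 ≤ s ^ 2 * v := by positivity
  rw [hexp, Real.exp_add]
  simp only [gaussLik, gaussD, ProbabilityTheory.gaussianPDFReal, Finset.prod_mul_distrib,
    Real.coe_toNNReal _ hw, Finset.prod_const, Finset.card_univ, ← Real.exp_sum, sub_zero,
    Real.sq_sqrt hv.le, hsqrt, ← pow_mul, mul_comm (Fintype.card τ), pow_add, mul_inv, mul_pow]
  ring

variable {a b c s : ℝ} {πv : Measure ℝ}

lemma invGammaKernel_mul_setLIntegral_gaussLik {v : ℝ} (hs : 0 < s) (hv : 0 < v)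
    {A : Set (κ → τ → ℝ)} (hA : MeasurableSet A) :
    ENNReal.ofReal (invGammaKernel a b v) *
        ∫⁻ ξ in A, ENNReal.ofReal (gaussLik Ψ y (ξ, v)) ∂(condPrior κ τ (s ^ 2 * v)) =
      ENNReal.ofReal ((√(2 * π))⁻¹ ^ Fintype.card ι *
          (√(2 * π) * s)⁻¹ ^ (Fintype.card κ * Fintype.card τ)) *
        (ENNReal.ofReal (invGammaKernel
            (a + (Fintype.card ι + Fintype.card κ * Fintype.card τ : ℕ) / 2) b v) *
          ∫⁻ ξ in A, ENNReal.ofReal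
            (exp (-‖augResponse κ τ y - augDesign Ψ s⁻¹ ξ‖ ^ 2 / (2 * v)))) := by
  have hdens (ξ : κ → τ → ℝ) : 0 ≤ ∏ k, ∏ t,
      ProbabilityTheory.gaussianPDFReal 0 (Real.toNNReal (s ^ 2 * v)) (ξ k t) :=
    Finset.prod_nonneg fun k _ => Finset.prod_nonneg fun t _ =>
      ProbabilityTheory.gaussianPDFReal_nonneg _ _ _
  have := ProbabilityTheory.measurable_gaussianPDFReal 0 (Real.toNNReal (s ^ 2 * v))
  rw [condPrior_eq_withDensity κ τ (by positivity),
    setLIntegral_withDensity_eq_setLIntegral_mul_non_measurable _ (by fun_prop) _ hA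
      (.of_forall fun ξ => ENNReal.ofReal_lt_top)]
  simp only [Pi.mul_apply, ← ENNReal.ofReal_mul (hdens _), prior_density_mul_gaussLik Ψ y hs hv]
  rw [← lintegral_const_mul' _ _ ENNReal.ofReal_ne_top,
    ← lintegral_const_mul' _ _ ENNReal.ofReal_ne_top,
    ← lintegral_const_mul' _ _ ENNReal.ofReal_ne_top]
  refine lintegral_congr fun ξ => ?_
  have hkernel := invGammaKernel_nonneg a b hv.le
  rw [← invGammaKernel_mul_inv_sqrt_pow _ _ _ hv, ← ENNReal.ofReal_mul (by positivity),
    ← ENNReal.ofReal_mul (by positivity), ← ENNReal.ofReal_mul (by positivity)]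
  congr 1
  ring

variable (hc : 0 ≤ c) (hs : 0 < s)
  (hπv : πv = (volume.restrict (Set.Ioi 0)).withDensity
    fun v => ENNReal.ofReal (c * invGammaKernel a b v))

include hc hs hπv

lemma setLIntegral_gaussLik_hierPrior {A : Set ((κ → τ → ℝ) × ℝ)} (hA : MeasurableSet A) :
    ∫⁻ θ in A, ENNReal.ofReal (gaussLik Ψ y θ) ∂(hierPrior κ τ s πv) =
      ENNReal.ofReal (c * ((√(2 * π))⁻¹ ^ Fintype.card ι *
          (√(2 * π) * s)⁻¹ ^ (Fintype.card κ * Fintype.card τ))) *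
        ∫⁻ v in Set.Ioi 0, ENNReal.ofReal (invGammaKernel
            (a + (Fintype.card ι + Fintype.card κ * Fintype.card τ : ℕ) / 2) b v) *
          ∫⁻ ξ in {ξ | (ξ, v) ∈ A}, ENNReal.ofReal
            (exp (-‖augResponse κ τ y - augDesign Ψ s⁻¹ ξ‖ ^ 2 / (2 * v))) := by
  have hslice (v : ℝ) : MeasurableSet {ξ | (ξ, v) ∈ A} := hA.preimage (by fun_prop)
  have hL := (measurable_gaussLik Ψ y).ennreal_ofReal
  have hkernel := measurable_invGammaKernel a b
  rw [← lintegral_indicator hA, lintegral_hierPrior s πv (hL.indicator hA), hπv,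
    lintegral_withDensity_eq_lintegral_mul_non_measurable _ (by fun_prop)
      (.of_forall fun v => ENNReal.ofReal_lt_top),
    ENNReal.ofReal_mul hc, mul_assoc, ← lintegral_const_mul' _ _ ENNReal.ofReal_ne_top,
    ← lintegral_const_mul' _ _ ENNReal.ofReal_ne_top]
  refine setLIntegral_congr_fun measurableSet_Ioi fun v hv => ?_
  rw [← invGammaKernel_mul_setLIntegral_gaussLik Ψ y hs hv (hslice v), ← mul_assoc,
    ← ENNReal.ofReal_mul hc, ← lintegral_indicator (hslice v)]
  rfl

lemma setLIntegral_gaussLik_le {A : Set ((κ → τ → ℝ) × ℝ)} {T V : ℝ} (hb : 0 ≤ b) (hV : 0 < V)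
    (hT : 0 ≤ T) (hA : MeasurableSet A)
    (hAT : ∀ θ ∈ A, T < ‖augDesign Ψ s⁻¹ θ.1 -
      lsFit (augDesign Ψ s⁻¹) (augResponse κ τ y)‖ ^ 2) :
    ∫⁻ θ in A, ENNReal.ofReal (gaussLik Ψ y θ) ∂(hierPrior κ τ s πv) ≤
      ENNReal.ofReal (2 ^ (-(a + Fintype.card ι / 2)) *
          exp ((b + ‖augResponse κ τ y -
            lsFit (augDesign Ψ s⁻¹) (augResponse κ τ y)‖ ^ 2) / (2 * V)) +
          exp (-T / (4 * V)) * √2 ^ (Fintype.card κ * Fintype.card τ)) *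
        ∫⁻ θ, ENNReal.ofReal (gaussLik Ψ y θ) ∂(hierPrior κ τ s πv) := by
  have hdim : Module.finrank ℝ (κ → τ → ℝ) = Fintype.card κ * Fintype.card τ := by
    simp [Module.finrank_pi_fintype]
  have hshape : a + (Fintype.card ι + Fintype.card κ * Fintype.card τ : ℕ) / 2 -
      (Fintype.card κ * Fintype.card τ : ℕ) / 2 = a + Fintype.card ι / 2 := by
    push_cast
    ring
  have hcore := lintegral_normalInverseGamma_tail_le (s := a +
    (Fintype.card ι + Fintype.card κ * Fintype.card τ : ℕ) / 2) (augDesign Ψ s⁻¹)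
    (augResponse κ τ y) volume hb hV hT
  rw [hdim, hshape] at hcore
  have htotal := setLIntegral_gaussLik_hierPrior Ψ y hc hs hπv MeasurableSet.univ
  simp only [Set.mem_univ, Set.ofPred_true, setLIntegral_univ] at htotal
  rw [setLIntegral_gaussLik_hierPrior Ψ y hc hs hπv hA, htotal,
    mul_left_comm (ENNReal.ofReal _)]
  have hslice (v : ℝ) : {ξ | (ξ, v) ∈ A} ⊆ {ξ | T < ‖augDesign Ψ s⁻¹ ξ -
      lsFit (augDesign Ψ s⁻¹) (augResponse κ τ y)‖ ^ 2} := fun ξ hξ => hAT (ξ, v) hξ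
  refine mul_le_mul_right (le_trans (lintegral_mono fun v => ?_) hcore) _
  exact mul_le_mul_right (lintegral_mono_set (hslice v)) _

theorem postGen_gaussLik_le {A : Set ((κ → τ → ℝ) × ℝ)} {T V : ℝ} (hb : 0 ≤ b) (hV : 0 < V)
    (hT : 0 ≤ T) (hA : MeasurableSet A)
    (hAT : ∀ θ ∈ A, T < ‖augDesign Ψ s⁻¹ θ.1 -
      lsFit (augDesign Ψ s⁻¹) (augResponse κ τ y)‖ ^ 2) :
    postGen (hierPrior κ τ s πv) (gaussLik Ψ y) A ≤
      2 ^ (-(a + Fintype.card ι / 2)) *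
          exp ((b + ‖augResponse κ τ y -
            lsFit (augDesign Ψ s⁻¹) (augResponse κ τ y)‖ ^ 2) / (2 * V)) +
        exp (-T / (4 * V)) * √2 ^ (Fintype.card κ * Fintype.card τ) :=
  postGen_le_of_lintegral_le (gaussLik_nonneg Ψ y) (measurable_gaussLik Ψ y) (by positivity)
    (setLIntegral_gaussLik_le Ψ y hc hs hπv hb hV hT hA hAT)

end Posterior

section Noise

variable {ι κ τ : Type*}

/-- A random vector of uncorrelated errors of variance `v`, encoded by its second-moment matrix
being `v` times the identity, which is what the variance computations use. -/
structure IsWhiteNoise (v : ℝ≥0) (P : Measure (ι → ℝ)) : Prop where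
  memLp (i : ι) : MemLp (fun e : ι → ℝ => e i) 2 P
  integral_mul (i j : ι) : ∫ e, e i * e j ∂P = if i = j then (v : ℝ) else 0

lemma isWhiteNoise_pi_gaussianReal [Fintype ι] (v : ℝ≥0) :
    IsWhiteNoise v (Measure.pi fun _ : ι => ProbabilityTheory.gaussianReal 0 v) := by
  set γ := ProbabilityTheory.gaussianReal 0 v
  have heval (i : ι) := measurePreserving_eval (fun _ : ι => γ) i
  have hmemLp (i : ι) : MemLp (fun e : ι → ℝ => e i) 2 (Measure.pi fun _ : ι => γ) :=
    (ProbabilityTheory.memLp_id_gaussianReal (μ := 0) (v := v) 2).comp_measurePreserving (heval i)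
  have hintegral {f : ℝ → ℝ} (hf : Measurable f) (i : ι) :
      ∫ e, f (e i) ∂(Measure.pi fun _ : ι => γ) = ∫ t, f t ∂γ := by
    have h := integral_map (μ := Measure.pi fun _ : ι => γ) (measurable_pi_apply i).aemeasurable
      hf.aestronglyMeasurable
    rw [(heval i).map_eq] at h
    exact h.symm
  have hmean : ∫ t, t ∂γ = 0 := ProbabilityTheory.integral_id_gaussianReal
  refine ⟨hmemLp, fun i j => ?_⟩
  split_ifs with hij
  · have hvar := ProbabilityTheory.variance_id_gaussianReal (μ := 0) (v := v)
    rw [ProbabilityTheory.variance_of_integral_eq_zero aemeasurable_id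
      hmean] at hvar
    rw [← hij, ← hvar, ← hintegral (measurable_id.pow_const 2) i]
    simp [sq]
  · have hindep : ProbabilityTheory.iIndepFun (fun i (e : ι → ℝ) => e i)
        (Measure.pi fun _ : ι => γ) :=
      ProbabilityTheory.iIndepFun_pi (X := fun _ x => x) fun _ => aemeasurable_id
    rw [(hindep.indepFun hij).integral_fun_mul_eq_mul_integral
      (hmemLp i).aestronglyMeasurable (hmemLp j).aestronglyMeasurable,
      hintegral measurable_id' i, hmean, zero_mul]

lemma measure_lt_le_ofReal_integral_div {Ω : Type*} [MeasurableSpace Ω] {P : Measure Ω} {f : Ω → ℝ}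
    (hf : Integrable f P) (hf₀ : ∀ x, 0 ≤ f x) {t : ℝ} (ht : 0 < t) :
    P {x | t < f x} ≤ ENNReal.ofReal ((∫ x, f x ∂P) / t) := by
  rw [ENNReal.ofReal_div_of_pos ht, ofReal_integral_eq_lintegral_ofReal hf (.of_forall hf₀)]
  refine (measure_mono fun x hx => ?_).trans (meas_ge_le_lintegral_div
    hf.aemeasurable.ennreal_ofReal (ENNReal.ofReal_pos.2 ht).ne' ENNReal.ofReal_ne_top)
  exact ENNReal.ofReal_le_ofReal hx.le

lemma inner_augResponse [Fintype ι] [Fintype κ] [Fintype τ] (w : EuclideanSpace ℝ (ι ⊕ κ × τ))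
    (e : ι → ℝ) : inner ℝ w (augResponse κ τ e) = ∑ i, w (.inl i) * e i := by
  simp [augResponse, PiLp.inner_apply, Fintype.sum_sum_type, mul_comm]

namespace IsWhiteNoise

variable {v : ℝ≥0} {P : Measure (ι → ℝ)} (hP : IsWhiteNoise v P)

include hP

lemma integrable_mul (i j : ι) : Integrable (fun e : ι → ℝ => e i * e j) P :=
  (hP.memLp i).integrable_mul (hP.memLp j)

variable [Fintype ι]

lemma memLp_sum_mul (u : ι → ℝ) : MemLp (fun e : ι → ℝ => ∑ i, u i * e i) 2 P :=
  memLp_finsetSum _ fun i _ => (hP.memLp i).const_mul (u i)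

lemma integral_sum_mul_sq (u : ι → ℝ) : ∫ e, (∑ i, u i * e i) ^ 2 ∂P = v * ∑ i, u i ^ 2 := by
  have hint (i j : ι) : Integrable (fun e : ι → ℝ => (u i * u j) * (e i * e j)) P :=
    (hP.integrable_mul i j).const_mul _
  simp only [sq, Finset.sum_mul_sum, mul_mul_mul_comm (u _) _ (u _)]
  rw [integral_finsetSum _ fun i _ => integrable_finsetSum _ fun j _ => hint i j]
  simp only [integral_finsetSum _ fun j _ => hint _ j, integral_const_mul, hP.integral_mul,
    mul_ite, mul_zero, Finset.sum_ite_eq, Finset.mem_univ, if_true, Finset.mul_sum]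
  exact Finset.sum_congr rfl fun i _ => mul_comm _ _

lemma measure_lt_sum_sq_le {t : ℝ} (ht : 0 < t) :
    P {e | t < ∑ i, e i ^ 2} ≤ ENNReal.ofReal (Fintype.card ι * v / t) := by
  have hint (i : ι) : Integrable (fun e : ι → ℝ => e i ^ 2) P := (hP.memLp i).integrable_sq
  refine (measure_lt_le_ofReal_integral_div (integrable_finsetSum _ fun i _ => hint i)
    (fun e => Finset.sum_nonneg fun i _ => sq_nonneg _) ht).trans_eq ?_
  rw [integral_finsetSum _ fun i _ => hint i]
  simp [sq, hP.integral_mul]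

variable [Fintype κ] [Fintype τ]

lemma memLp_inner_augResponse (w : EuclideanSpace ℝ (ι ⊕ κ × τ)) :
    MemLp (fun e => inner ℝ w (augResponse κ τ e)) 2 P := by
  simpa only [inner_augResponse] using hP.memLp_sum_mul _

lemma integral_inner_augResponse_sq_le (w : EuclideanSpace ℝ (ι ⊕ κ × τ)) :
    ∫ e, inner ℝ w (augResponse κ τ e) ^ 2 ∂P ≤ v * ‖w‖ ^ 2 := by
  simp only [inner_augResponse, hP.integral_sum_mul_sq, EuclideanSpace.real_norm_sq_eq,
    Fintype.sum_sum_type]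
  gcongr
  exact le_add_of_nonneg_right (Finset.sum_nonneg fun _ _ => sq_nonneg _)

lemma measure_lt_norm_lsFit_augResponse_sq_le {E : Type*} [NormedAddCommGroup E] [NormedSpace ℝ E]
    [FiniteDimensional ℝ E] (Φ : E →ₗ[ℝ] EuclideanSpace ℝ (ι ⊕ κ × τ)) {t : ℝ} (ht : 0 < t) :
    P {e | t < ‖lsFit Φ (augResponse κ τ e)‖ ^ 2} ≤
      ENNReal.ofReal (Module.finrank ℝ E * v / t) := by
  set u := stdOrthonormalBasis ℝ (LinearMap.range Φ)
  have hint (i) : Integrable (fun e => inner ℝ (u i : EuclideanSpace ℝ (ι ⊕ κ × τ))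
      (augResponse κ τ e) ^ 2) P := (hP.memLp_inner_augResponse _).integrable_sq
  have hnorm (i) : ‖(u i : EuclideanSpace ℝ (ι ⊕ κ × τ))‖ = 1 := u.norm_eq_one i
  simp only [norm_lsFit_sq]
  refine (measure_lt_le_ofReal_integral_div (integrable_finsetSum _ fun i _ => hint i)
    (fun e => Finset.sum_nonneg fun i _ => sq_nonneg _) ht).trans (ENNReal.ofReal_le_ofReal ?_)
  gcongr
  calc ∫ e, ∑ i, inner ℝ (u i : EuclideanSpace ℝ (ι ⊕ κ × τ)) (augResponse κ τ e) ^ 2 ∂P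
      = ∑ i, ∫ e, inner ℝ (u i : EuclideanSpace ℝ (ι ⊕ κ × τ)) (augResponse κ τ e) ^ 2 ∂P :=
        integral_finsetSum _ fun i _ => hint i
    _ ≤ ∑ i, v * ‖(u i : EuclideanSpace ℝ (ι ⊕ κ × τ))‖ ^ 2 :=
        Finset.sum_le_sum fun i _ => hP.integral_inner_augResponse_sq_le _
    _ = Module.finrank ℝ (LinearMap.range Φ) * v := by
        simp only [hnorm, one_pow, mul_one, Finset.sum_const, Finset.card_univ, Fintype.card_fin,
          nsmul_eq_mul]
    _ ≤ Module.finrank ℝ E * v := by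
        gcongr
        exact LinearMap.finrank_range_le Φ

end IsWhiteNoise

end Noise

section FiniteSample

variable {ι κ τ : Type*} [Fintype ι] [Fintype κ] [Fintype τ] (Ψ : (κ → τ → ℝ) →ₗ[ℝ] ι → ℝ)

lemma sum_sq_sub_le_norm_augDesign_sub_sq (F : ι → ℝ) (r : ℝ) (ξ : κ → τ → ℝ) :
    ∑ i, (Ψ ξ i - F i) ^ 2 ≤ ‖augDesign Ψ r ξ - augResponse κ τ F‖ ^ 2 := by
  rw [norm_sub_rev, norm_augResponse_sub_sq]
  simp only [sub_sq_comm (F _)]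
  exact le_add_of_nonneg_right (by positivity)

lemma norm_augResponse_sub_lsFit_sq_le (y : ι → ℝ) (r : ℝ) :
    ‖augResponse κ τ y - lsFit (augDesign Ψ r) (augResponse κ τ y)‖ ^ 2 ≤ ∑ i, y i ^ 2 := by
  have hzero := norm_augResponse_sub_sq Ψ y r 0
  simp only [map_zero, Pi.zero_apply, sub_zero, ne_eq, OfNat.ofNat_ne_zero, not_false_eq_true,
    zero_pow, Finset.sum_const_zero, mul_zero, add_zero] at hzero
  rw [← hzero, norm_sub_rev]
  have hfit := norm_lsFit_sub_le (augDesign Ψ r) (augResponse κ τ y) 0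
  rw [map_zero, zero_sub, norm_neg] at hfit
  gcongr

lemma sum_add_sq_le (F e : ι → ℝ) :
    ∑ i, (F + e) i ^ 2 ≤ 2 * ∑ i, F i ^ 2 + 2 * ∑ i, e i ^ 2 := by
  rw [← mul_add, ← Finset.sum_add_distrib, Finset.mul_sum]
  exact Finset.sum_le_sum fun i _ => add_sq_le

lemma measurable_sum_sq_sub (F : ι → ℝ) :
    Measurable fun θ : (κ → τ → ℝ) × ℝ => ∑ i, (Ψ θ.1 i - F i) ^ 2 := by
  have hΨ : Measurable Ψ := Ψ.continuous_of_finiteDimensional.measurable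
  fun_prop

variable {a b c s : ℝ} {πv : Measure ℝ} {v : ℝ≥0} {P : Measure (ι → ℝ)}

theorem IsWhiteNoise.measure_lt_postGen_le (hP : IsWhiteNoise v P) (hb : 0 ≤ b)
    (hc : 0 ≤ c) (hs : 0 < s)
    (hπv : πv = (volume.restrict (Set.Ioi 0)).withDensity
      fun v => ENNReal.ofReal (c * invGammaKernel a b v))
    (F : ι → ℝ) {ξ : κ → τ → ℝ} {G t T V : ℝ} (ht : 0 < t) (hT : 0 < T) (hV : 0 < V)
    (hG : ‖augDesign Ψ s⁻¹ ξ - augResponse κ τ F‖ ^ 2 ≤ G) :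
    P {e | 2 ^ (-(a + Fintype.card ι / 2)) *
            exp ((b + (2 * ∑ i, F i ^ 2 + 2 * t)) / (2 * V)) +
          exp (-T / (4 * V)) * √2 ^ (Fintype.card κ * Fintype.card τ) <
        postGen (hierPrior κ τ s πv) (gaussLik Ψ (F + e))
          {θ | 3 * (2 * T + G) < ∑ i, (Ψ θ.1 i - F i) ^ 2}} ≤
      ENNReal.ofReal (Fintype.card ι * v / t) +
        ENNReal.ofReal ((Fintype.card κ * Fintype.card τ : ℕ) * v / T) := by
  have hdim : Module.finrank ℝ (κ → τ → ℝ) = Fintype.card κ * Fintype.card τ := by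
    simp [Module.finrank_pi_fintype]
  have henergy := hP.measure_lt_sum_sq_le ht
  have hproj := hP.measure_lt_norm_lsFit_augResponse_sq_le (augDesign Ψ s⁻¹) hT
  rw [hdim] at hproj
  refine (measure_mono fun e he => ?_).trans
    ((measure_union_le _ _).trans (add_le_add henergy hproj))
  by_contra hgood
  simp only [Set.mem_union, Set.mem_ofPred_eq, not_or, not_lt] at hgood
  obtain ⟨he_energy, he_proj⟩ := hgood
  refine (lt_irrefl _ <| he.trans_le <| (postGen_gaussLik_le Ψ (F + e) hc hs hπv hb hV hT.le
    (measurableSet_lt measurable_const (measurable_sum_sq_sub Ψ F)) fun θ hθ => ?_).trans ?_)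
  · have hsplit := norm_sub_sq_le_of_noise (augDesign Ψ s⁻¹) (augResponse κ τ F)
      (augResponse κ τ e) θ.1 ξ
    rw [← augResponse_add] at hsplit
    have := hθ.trans_le ((sum_sq_sub_le_norm_augDesign_sub_sq Ψ F s⁻¹ θ.1).trans hsplit)
    linarith
  · have := (norm_augResponse_sub_lsFit_sq_le Ψ (F + e) s⁻¹).trans (sum_add_sq_le F e)
    gcongr
    linarith

end FiniteSample

section Rate

/-- The scale `(n / log n)^{1/(2α+p)}`, which `K_n` rounds up to an integer. -/
def rateScale (α : ℝ) (p n : ℕ) : ℝ := ((n : ℝ) / log n) ^ (1 / (2 * α + (p : ℝ)))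

/-- The squared contraction rate `ε_n²`. -/
def sqRate (α : ℝ) (p n : ℕ) : ℝ :=
  (n : ℝ) ^ (-(2 * α) / (2 * α + p)) * log n ^ (2 * α / (2 * α + p))

variable {α : ℝ} {p m n : ℕ}

lemma one_le_rateScale (hα : 0 ≤ α) (hn : 1 < n) : 1 ≤ rateScale α p n := by
  have hn' : (1 : ℝ) < n := mod_cast hn
  refine one_le_rpow ?_ (by positivity)
  rw [one_le_div (log_pos hn')]
  exact log_le_self (by linarith)

lemma sqRate_eq (α : ℝ) (p n : ℕ) : sqRate α p n = (rateScale α p n ^ (-α)) ^ 2 := by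
  have hlog : 0 ≤ log n := log_natCast_nonneg n
  have hu : 0 ≤ (n : ℝ) / log n := by positivity
  rw [sqRate, rateScale, neg_div, rpow_neg (by positivity), ← rpow_mul hu, ← rpow_mul_natCast hu,
    show 1 / (2 * α + p) * -α * (2 : ℕ) = -(2 * α / (2 * α + p)) by push_cast; ring,
    rpow_neg hu, div_rpow (by positivity) hlog]
  field_simp

lemma nat_mul_sqRate (hα : 0 < α) (hn : 1 < n) :
    n * sqRate α p n = rateScale α p n ^ p * log n := by
  have hlog : 0 < log n := log_pos (mod_cast hn)
  have hu : 0 < (n : ℝ) / log n := by positivity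
  have hpow : rateScale α p n ^ p = n / log n * sqRate α p n := by
    rw [sqRate_eq, rateScale, ← rpow_mul hu.le, ← rpow_mul_natCast hu.le, ← rpow_mul_natCast hu.le]
    nth_rewrite 2 [← rpow_one ((n : ℝ) / log n)]
    rw [← rpow_add hu]
    congr 1
    field_simp
    push_cast
    ring
  rw [hpow]
  field_simp

lemma Kn_pos (hα : 0 ≤ α) (hn : 1 < n) : 0 < Kn α p n :=
  Nat.ceil_pos.2 (zero_lt_one.trans_le (one_le_rateScale hα hn))

lemma two_div_Kn_rpow_sq_le (hα : 0 ≤ α) (hn : 1 < n) :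
    ((2 / (Kn α p n : ℝ)) ^ α) ^ 2 ≤ 4 ^ α * sqRate α p n := by
  have hscale := one_le_rateScale (p := p) hα hn
  have hKn : rateScale α p n ≤ Kn α p n := Nat.le_ceil _
  calc ((2 / (Kn α p n : ℝ)) ^ α) ^ 2 ≤ ((2 / rateScale α p n) ^ α) ^ 2 := by gcongr
    _ = 4 ^ α * sqRate α p n := by
      rw [sqRate_eq, div_rpow zero_le_two (by positivity), div_eq_mul_inv,
        ← rpow_neg (by positivity), mul_pow, ← rpow_mul_natCast zero_le_two, mul_comm α,
        rpow_natCast_mul zero_le_two]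
      norm_num

lemma card_coeff_le (hα : 0 ≤ α) (hn : 1 < n) :
    ((Fintype.card (Fin p → Fin (Kn α p n)) * Fintype.card (Fin p → Fin (m + 1)) : ℕ) : ℝ) ≤
      (2 * (m + 1)) ^ p * rateScale α p n ^ p := by
  have hscale := one_le_rateScale (p := p) hα hn
  have hKn : (Kn α p n : ℝ) < rateScale α p n + 1 :=
    Nat.ceil_lt_add_one (zero_le_one.trans hscale)
  simp only [Fintype.card_fun, Fintype.card_fin, Nat.cast_mul, Nat.cast_pow, Nat.cast_add_one]
  rw [← mul_pow, ← mul_pow]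
  have hKn_two : (Kn α p n : ℝ) ≤ 2 * rateScale α p n := by linarith
  calc ((Kn α p n : ℝ) * (m + 1)) ^ p ≤ (2 * rateScale α p n * (m + 1)) ^ p := by gcongr
    _ = (2 * (m + 1) * rateScale α p n) ^ p := by ring

lemma two_rpow_neg_mul_exp_le {a N x : ℝ} (ha : 0 ≤ a) (hN : 0 ≤ N) (hx : x ≤ N / 8) :
    2 ^ (-(a + N / 2)) * exp x ≤ exp (-(N / 8)) := by
  have hlog := log_two_gt_d9
  rw [rpow_def_of_pos two_pos, ← exp_add]
  gcongr
  nlinarith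

lemma exp_neg_mul_sqrt_two_pow_le {C r U : ℝ} {D : ℕ} (hU : 1 ≤ U) (hD : D ≤ C * U) (hr : C ≤ r) :
    exp (-(U * r)) * √2 ^ D ≤ exp (-(r - C)) := by
  have hsqrt : √2 ≤ 2 := sqrt_le_iff.2 ⟨zero_le_two, by norm_num⟩
  have hexp : 1 + 1 ≤ exp 1 := add_one_le_exp 1
  calc exp (-(U * r)) * √2 ^ D ≤ exp (-(U * r)) * exp 1 ^ D := by
        gcongr
        linarith
    _ = exp (-(U * r) + D) := by rw [← exp_nat_mul, mul_one, exp_add]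
    _ ≤ exp (-(r - C)) := by
      gcongr
      nlinarith

end Rate

section Contraction

/-- The values of the simplified kernel mixture of polynomials at the design points, as a linear
function of its coefficients. -/
def kmpDesign {p : ℕ} (φ : (Fin p → ℝ) → ℝ) (m : ℕ) (α : ℝ) (n : ℕ) (x : Fin n → Fin p → ℝ) :
    ((Fin p → Fin (Kn α p n)) → (Fin p → Fin (m + 1)) → ℝ) →ₗ[ℝ] Fin n → ℝ where
  toFun ξ i := simpleKmp φ m α n ξ (x i)
  map_add' ξ η := by
    ext i
    simp only [simpleKmp, kmpFun, Pi.add_apply, add_mul, Finset.sum_add_distrib]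
  map_smul' c ξ := by
    ext i
    simp only [simpleKmp, kmpFun, Pi.smul_apply, smul_eq_mul, mul_assoc, ← Finset.mul_sum,
      RingHom.id_apply]

variable {p m n : ℕ} {α A B a b c : ℝ} {φ : (Fin p → ℝ) → ℝ} {x : Fin n → Fin p → ℝ}
  {F : Fin n → ℝ} {ξ : (Fin p → Fin (Kn α p n)) → (Fin p → Fin (m + 1)) → ℝ}

lemma sum_sq_kmpDesign_sub_le (hα : 0 ≤ α) (hn : 1 < n)
    (hξF : ∀ i, |simpleKmp φ m α n ξ (x i) - F i| ≤ A * (2 / (Kn α p n : ℝ)) ^ α) :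
    ∑ i, (F i - kmpDesign φ m α n x ξ i) ^ 2 ≤ A ^ 2 * 4 ^ α * (n * sqRate α p n) := by
  have hpoint (i : Fin n) :
      (F i - kmpDesign φ m α n x ξ i) ^ 2 ≤ A ^ 2 * (4 ^ α * sqRate α p n) := by
    rw [sub_sq_comm]
    refine (sq_le_sq' (abs_le.1 (hξF i)).1 (abs_le.1 (hξF i)).2).trans ?_
    rw [mul_pow]
    gcongr
    exact two_div_Kn_rpow_sq_le hα hn
  calc ∑ i, (F i - kmpDesign φ m α n x ξ i) ^ 2
      ≤ ∑ _i : Fin n, A ^ 2 * (4 ^ α * sqRate α p n) := Finset.sum_le_sum fun i _ => hpoint i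
    _ = A ^ 2 * 4 ^ α * (n * sqRate α p n) := by
      rw [Finset.sum_const, Finset.card_univ, Fintype.card_fin, nsmul_eq_mul]
      ring

lemma sum_sq_coeff_le (hα : 0 < α) (hn : 1 < n) (hlog : 1 ≤ log n) (hξ : ∀ k s, |ξ k s| ≤ A) :
    ∑ k, ∑ s, ξ k s ^ 2 ≤ A ^ 2 * (2 * (m + 1)) ^ p * (n * sqRate α p n) := by
  have hscale := one_le_rateScale (p := p) hα.le hn
  have hsq (k s) : ξ k s ^ 2 ≤ A ^ 2 := sq_le_sq' (abs_le.1 (hξ k s)).1 (abs_le.1 (hξ k s)).2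
  calc ∑ k, ∑ s, ξ k s ^ 2
      ≤ ∑ _k : Fin p → Fin (Kn α p n), ∑ _s : Fin p → Fin (m + 1), A ^ 2 :=
        Finset.sum_le_sum fun k _ => Finset.sum_le_sum fun s _ => hsq k s
    _ = (Fintype.card (Fin p → Fin (Kn α p n)) * Fintype.card (Fin p → Fin (m + 1)) : ℕ) *
          A ^ 2 := by
        simp only [Finset.sum_const, Finset.card_univ, nsmul_eq_mul, Nat.cast_mul, mul_assoc]
    _ ≤ (2 * (m + 1)) ^ p * rateScale α p n ^ p * A ^ 2 := by
        gcongr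
        exact card_coeff_le hα.le hn
    _ ≤ A ^ 2 * (2 * (m + 1)) ^ p * (n * sqRate α p n) := by
        rw [nat_mul_sqRate hα hn, mul_comm _ (A ^ 2), mul_assoc]
        gcongr
        exact le_mul_of_one_le_right (by positivity) hlog

lemma norm_augDesign_kmpDesign_sub_sq_le (hα : 0 < α) (hn : 1 < n) (hlog : 1 ≤ log n)
    (hξ : ∀ k s, |ξ k s| ≤ A)
    (hξF : ∀ i, |simpleKmp φ m α n ξ (x i) - F i| ≤ A * (2 / (Kn α p n : ℝ)) ^ α) :
    ‖augDesign (kmpDesign φ m α n x) (n : ℝ)⁻¹ ξ - augResponse _ _ F‖ ^ 2 ≤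
      A ^ 2 * (4 ^ α + (2 * (m + 1)) ^ p) * (n * sqRate α p n) := by
  have hinv : ((n : ℝ)⁻¹) ^ 2 ≤ 1 := pow_le_one₀ (by positivity) (Nat.cast_inv_le_one n)
  have hridge := mul_le_of_le_one_left (by positivity : 0 ≤ ∑ k, ∑ s, ξ k s ^ 2) hinv
  rw [norm_sub_rev, norm_augResponse_sub_sq]
  linarith [sum_sq_kmpDesign_sub_le hα.le hn hξF, sum_sq_coeff_le hα hn hlog hξ]

lemma variance_exponent_le (hb : 0 ≤ b) (hn : 1 < n) (hF : ∀ i, |F i| ≤ B) {R : ℝ} (hR : 0 < R)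
    (hBR : B ^ 2 + b / 2 ≤ R) :
    (b + (2 * ∑ i, F i ^ 2 + 2 * (n * R))) / (2 * (16 * R)) ≤ n / 8 := by
  have hn' : (1 : ℝ) ≤ n := mod_cast hn.le
  have henergy : ∑ i, F i ^ 2 ≤ n * B ^ 2 := by
    calc ∑ i, F i ^ 2 ≤ ∑ _i : Fin n, B ^ 2 :=
          Finset.sum_le_sum fun i _ => sq_le_sq' (abs_le.1 (hF i)).1 (abs_le.1 (hF i)).2
      _ = n * B ^ 2 := by simp
  have hnR : n * (B ^ 2 + b / 2) ≤ n * R := by gcongr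
  rw [div_le_iff₀ (by positivity)]
  nlinarith

lemma posterior_bound_le (hα : 0 < α) (ha : 0 ≤ a) (hb : 0 ≤ b) (hn : 1 < n)
    (hF : ∀ i, |F i| ≤ B) (hB : B ^ 2 + b / 2 ≤ √(log n))
    (hC : 64 * (2 * (m + 1)) ^ p ≤ √(log n)) :
    2 ^ (-(a + (Fintype.card (Fin n) : ℝ) / 2)) *
          exp ((b + (2 * ∑ i, F i ^ 2 + 2 * (n * √(log n)))) / (2 * (16 * √(log n)))) +
        exp (-(n * sqRate α p n) / (4 * (16 * √(log n)))) *
          √2 ^ (Fintype.card (Fin p → Fin (Kn α p n)) * Fintype.card (Fin p → Fin (m + 1))) ≤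
      exp (-((n : ℝ) / 8)) + exp (-(√(log n) / 64 - (2 * (m + 1)) ^ p)) := by
  have hlog : 0 < log n := log_pos (mod_cast hn)
  have hR : 0 < √(log n) := sqrt_pos.2 hlog
  have hexponent : -(n * sqRate α p n) / (4 * (16 * √(log n))) =
      -(rateScale α p n ^ p * (√(log n) / 64)) := by
    rw [nat_mul_sqRate hα hn, div_eq_iff (by positivity)]
    nth_rewrite 1 [← mul_self_sqrt hlog.le]
    ring
  rw [Fintype.card_fin, hexponent]
  exact add_le_add (two_rpow_neg_mul_exp_le ha (Nat.cast_nonneg n)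
    (variance_exponent_le hb hn hF hR hB)) (exp_neg_mul_sqrt_two_pow_le
      (one_le_pow₀ (one_le_rateScale hα.le hn)) (card_coeff_le hα.le hn) (by linarith))

theorem measure_lt_postGen_fixedPrior_le {v : ℝ≥0} {P : Measure (Fin n → ℝ)} {πv : Measure ℝ}
    (hP : IsWhiteNoise v P) (hα : 0 < α) (ha : 0 ≤ a) (hb : 0 ≤ b) (hc : 0 ≤ c)
    (hπv : πv = (volume.restrict (Set.Ioi 0)).withDensity
      fun v => ENNReal.ofReal (c * invGammaKernel a b v))
    (hn : 1 < n) (hlog : 1 ≤ log n) (hF : ∀ i, |F i| ≤ B) (hξ : ∀ k s, |ξ k s| ≤ A)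
    (hξF : ∀ i, |simpleKmp φ m α n ξ (x i) - F i| ≤ A * (2 / (Kn α p n : ℝ)) ^ α)
    (hB : B ^ 2 + b / 2 ≤ √(log n)) (hC : 64 * (2 * (m + 1)) ^ p ≤ √(log n)) :
    P {e | exp (-((n : ℝ) / 8)) + exp (-(√(log n) / 64 - (2 * (m + 1)) ^ p)) <
        postGen (fixedPrior α p m n πv) (gaussLik (kmpDesign φ m α n x) (F + e))
          {θ | 3 * (2 + A ^ 2 * (4 ^ α + (2 * (m + 1)) ^ p)) * sqRate α p n <
            1 / (n : ℝ) * ∑ i, (kmpDesign φ m α n x θ.1 i - F i) ^ 2}} ≤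
      ENNReal.ofReal (v / √(log n)) + ENNReal.ofReal ((2 * (m + 1)) ^ p * v / log n) := by
  have hn₀ : (0 : ℝ) < n := mod_cast zero_lt_one.trans hn
  have hR : 0 < √(log n) := sqrt_pos.2 (by linarith)
  have hscale := one_le_rateScale (p := p) hα.le hn
  have hT : 0 < n * sqRate α p n := by
    rw [nat_mul_sqRate hα hn]
    positivity
  have hset : {θ : ((Fin p → Fin (Kn α p n)) → (Fin p → Fin (m + 1)) → ℝ) × ℝ |
      3 * (2 + A ^ 2 * (4 ^ α + (2 * (m + 1)) ^ p)) * sqRate α p n <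
        1 / (n : ℝ) * ∑ i, (kmpDesign φ m α n x θ.1 i - F i) ^ 2} =
      {θ | 3 * (2 * (n * sqRate α p n) + A ^ 2 * (4 ^ α + (2 * (m + 1)) ^ p) *
        (n * sqRate α p n)) < ∑ i, (kmpDesign φ m α n x θ.1 i - F i) ^ 2} := by
    ext θ
    rw [Set.mem_ofPred_eq, Set.mem_ofPred_eq, one_div, lt_inv_mul_iff₀ hn₀]
    ring_nf
  rw [hset]
  refine (measure_mono fun e he => (posterior_bound_le hα ha hb hn hF hB hC).trans_lt he).trans
    ((hP.measure_lt_postGen_le (kmpDesign φ m α n x) hb hc hn₀ hπv F (mul_pos hn₀ hR) hT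
      (by positivity) (norm_augDesign_kmpDesign_sub_sq_le hα hn hlog hξ hξF)).trans
      (add_le_add (ENNReal.ofReal_le_ofReal ?_) (ENNReal.ofReal_le_ofReal ?_)))
  · rw [Fintype.card_fin, mul_div_mul_left _ _ hn₀.ne']
  · rw [nat_mul_sqRate hα hn, div_le_div_iff₀ (by positivity) (by positivity)]
    have hcard := card_coeff_le (p := p) (m := m) hα.le hn
    calc _ ≤ (2 * (m + 1)) ^ p * rateScale α p n ^ p * v * log n := by gcongr
      _ = (2 * (m + 1)) ^ p * v * (rateScale α p n ^ p * log n) := by ring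

lemma tendsto_sqrt_log_natCast : Tendsto (fun n : ℕ => √(log n)) atTop atTop :=
  tendsto_sqrt_atTop.comp (tendsto_log_atTop.comp tendsto_natCast_atTop_atTop)

lemma tendsto_posterior_bound (C : ℝ) :
    Tendsto (fun n : ℕ => exp (-((n : ℝ) / 8)) + exp (-(√(log n) / 64 - C))) atTop (nhds 0) := by
  have hvariance : Tendsto (fun n : ℕ => exp (-((n : ℝ) / 8))) atTop (nhds 0) :=
    tendsto_exp_neg_atTop_nhds_zero.comp
      (tendsto_natCast_atTop_atTop.atTop_div_const (by norm_num))
  have hcoeff : Tendsto (fun n : ℕ => exp (-(√(log n) / 64 - C))) atTop (nhds 0) :=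
    tendsto_exp_neg_atTop_nhds_zero.comp (tendsto_atTop_add_const_right _ (-C)
      (tendsto_sqrt_log_natCast.atTop_div_const (by norm_num)))
  simpa only [add_zero] using hvariance.add hcoeff

lemma tendsto_exceedance_bound (v C : ℝ) :
    Tendsto (fun n : ℕ => ENNReal.ofReal (v / √(log n)) + ENNReal.ofReal (C * v / log n))
      atTop (nhds 0) := by
  have hlog : Tendsto (fun n : ℕ => log n) atTop atTop :=
    tendsto_log_atTop.comp tendsto_natCast_atTop_atTop
  simpa using (ENNReal.tendsto_ofReal (tendsto_sqrt_log_natCast.const_div_atTop v)).add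
    (ENNReal.tendsto_ofReal (hlog.const_div_atTop (C * v)))

theorem statement15_general {p m : ℕ} {α B aσ bσ c : ℝ} (hα : 0 < α) (hm : α ≤ m + 1)
    (haσ : 0 < aσ) (hbσ : 0 < bσ) {φ : (Fin p → ℝ) → ℝ} (hφ : ∀ u, 0 ≤ φ u)
    (hφ_supp : ∀ u, 1 < ‖u‖ → φ u = 0) (hφ_pos : ∀ u, ‖u‖ < 1 → 0 < φ u)
    {f₀ : (Fin p → ℝ) → ℝ} (hf₀ : IsHolder p α B f₀) {X : (n : ℕ) → Fin n → Fin p → ℝ}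
    (hX : ∀ n i, X n i ∈ cube p) {πv : Measure ℝ} (hc : 0 < c)
    (hπv : πv = (volume.restrict (Set.Ioi 0)).withDensity
      fun v => ENNReal.ofReal (c * v ^ (-aσ / 2 - 1) * exp (-bσ / (2 * v))))
    {v : ℝ≥0} {P : (n : ℕ) → Measure (Fin n → ℝ)} (hP : ∀ n, IsWhiteNoise v (P n)) :
    ∃ M : ℝ, 0 < M ∧ ∀ δ : ℝ, 0 < δ → Tendsto (fun n : ℕ =>
      P n {e | δ < postGen (fixedPrior α p m n πv)
        (fun θ => ∏ i, gaussD √θ.2 (f₀ (X n i) + e i - simpleKmp φ m α n θ.1 (X n i)))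
        {θ | M * ((n : ℝ) ^ (-(2 * α) / (2 * α + p)) * log n ^ (2 * α / (2 * α + p))) <
          1 / (n : ℝ) * ∑ i, (simpleKmp φ m α n θ.1 (X n i) - f₀ (X n i)) ^ 2}})
      atTop (nhds 0) := by
  obtain ⟨A, -, happrox⟩ := hf₀.exists_kmpFun_approx hα hm hφ hφ_supp hφ_pos
  have hdensity : πv = (volume.restrict (Set.Ioi 0)).withDensity
      fun v => ENNReal.ofReal (c * invGammaKernel (aσ / 2) bσ v) := by
    simpa only [invGammaKernel, neg_div, mul_assoc] using hπv
  refine ⟨3 * (2 + A ^ 2 * (4 ^ α + (2 * (m + 1)) ^ p)), by positivity, fun δ hδ => ?_⟩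
  refine tendsto_of_tendsto_of_tendsto_of_le_of_le' tendsto_const_nhds
    (tendsto_exceedance_bound v ((2 * (m + 1)) ^ p)) (.of_forall fun n => zero_le) ?_
  filter_upwards [(tendsto_posterior_bound ((2 * (m + 1)) ^ p)).eventually_lt_const hδ,
    tendsto_sqrt_log_natCast.eventually_ge_atTop (B ^ 2 + bσ / 2),
    tendsto_sqrt_log_natCast.eventually_ge_atTop (64 * (2 * (m + 1)) ^ p),
    tendsto_sqrt_log_natCast.eventually_ge_atTop 1, eventually_gt_atTop 1]
    with n hsmall hB hC hlog hn
  have hKn := Kn_pos (p := p) hα.le hn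
  have hKn' : (0 : ℝ) < Kn α p n := mod_cast hKn
  obtain ⟨ξ, hξ, hξf⟩ := happrox (Kn α p n) (2 / Kn α p n) hKn (by
    rw [div_lt_div_iff₀ (by positivity) hKn']
    linarith)
  exact (measure_mono fun e he => hsmall.trans he).trans (measure_lt_postGen_fixedPrior_le (hP n) hα
    (by positivity) hbσ.le hc.le hdensity hn (one_le_sqrt.1 hlog)
    (fun i => hf₀.abs_le (hX n i)) hξ (fun i => hξf (X n i) (hX n i)) hB hC)

end Contraction

/-- Rate of contraction, fixed design, simplified prior: with
`K_n = ⌈(n/log n)^{1/(2α+p)}⌉`, `h = 2/K_n`, centers fixed at `μ_k^⋆`, coefficients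
`ξ_{ks} | σ ~ N(0, n²σ²)` and `σ²` inverse-Gamma, the posterior contracts around an
α-Hölder `f₀` at rate `ε_n = (n/log n)^{-α/(2α+p)}` in squared empirical `L₂(P_n)`
distance. -/
theorem statement15 {p m : ℕ} (hp : 0 < p) (α B : ℝ) (hα : 0 < α) (hB : 0 < B)
    (hm : α ≤ (m : ℝ)) (σ₀ : ℝ) (hσ₀ : 0 < σ₀)
    (aσ bσ : ℝ) (haσ : 2 ≤ aσ) (hbσ : 2 ≤ bσ)
    (φ : (Fin p → ℝ) → ℝ) (hφ : IsBoxedKernel φ)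
    (hφpos : ∀ u : Fin p → ℝ, ‖u‖ < 1 → 0 < φ u)
    (f₀ : (Fin p → ℝ) → ℝ) (hf₀ : IsHolder p α B f₀)
    (X : (n : ℕ) → Fin n → (Fin p → ℝ)) (hX : ∀ n i, X n i ∈ cube p)
    (πv : Measure ℝ) [IsProbabilityMeasure πv]
    (hπv : ∃ c : ℝ, 0 < c ∧ πv = (volume.restrict (Set.Ioi (0 : ℝ))).withDensity
      fun v => ENNReal.ofReal (c * v ^ (-aσ / 2 - 1) * Real.exp (-bσ / (2 * v)))) :
    ∃ M : ℝ, 0 < M ∧ ∀ δ : ℝ, 0 < δ →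
      Filter.Tendsto (fun n : ℕ =>
          (Measure.pi fun _ : Fin n =>
              ProbabilityTheory.gaussianReal 0 (Real.toNNReal (σ₀ ^ 2)))
            {e : Fin n → ℝ | δ <
              postGen (fixedPrior α p m n πv)
                (fun θ => ∏ i,
                  gaussD (Real.sqrt θ.2)
                    (f₀ (X n i) + e i - simpleKmp φ m α n θ.1 (X n i)))
                {θ : ((Fin p → Fin (Kn α p n)) → (Fin p → Fin (m + 1)) → ℝ) × ℝ |
                  M * ((n : ℝ) ^ (-(2 * α) / (2 * α + p)) *
                      Real.log n ^ (2 * α / (2 * α + p))) <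
                    (1 / (n : ℝ)) *
                      ∑ i, (simpleKmp φ m α n θ.1 (X n i) - f₀ (X n i)) ^ 2}})
        Filter.atTop (nhds 0) := by
  obtain ⟨c, hc, hdensity⟩ := hπv
  exact statement15_general hα (by linarith) (by linarith) (by linarith) (fun u => (hφ.2.1 u).1)
    hφ.2.2.1 hφpos hf₀ hX hc hdensity fun n => isWhiteNoise_pi_gaussianReal _

end KMP
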